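/- arXiv:2205.06211 — 2 statements merged into one kernel-verified Lean document; each statement's English description precedes it below -/
import Mathlib

section
/- Let ω be a modulus of continuity of order n ∈ ℕ, let D ⊂ ℝ^d be a bounded Lipschitz domain, and let T be a homogeneous C^{n+1}-smooth Calderón–Zygmund operator. If the restricted operator T_D is bounded on 𝒞_ω(D) (there exists C′ such that every f ∈ 𝒞_ω(D) satisfies T_D f ∈ 𝒞_ω(D) and ‖T_D f‖_{ω,D} + ‖T_D f‖_{L¹(D)} ≤ C′·(‖f‖_{ω,D} + ‖f‖_{L¹(D)})), then: (i) for every polynomial P ∈ 𝒫_n one has T_D(P·χ_D) ∈ 𝒞_ω(D); and (ii) there exists a constant C such that for every cube Q ⊂ D centered at x₀ and every polynomial P that is homogeneous of degree n with respect to x − x₀ there exists a polynomial S_Q ∈ 𝒫_n with (1/|Q|)∫_Q |T_D(P·χ_D) − S_Q| dx ≤ C·‖P‖_{L^∞(D)}·ω̃(ℓ(Q)). -/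
open MeasureTheory Filter Set Metric
open scoped ENNReal Topology InnerProductSpace

noncomputable section

/-- The axis-parallel closed cube in `ℝ^d` with center `x₀` and side length `l`. -/
def cube {d : ℕ} (x₀ : EuclideanSpace ℝ (Fin d)) (l : ℝ) : Set (EuclideanSpace ℝ (Fin d)) :=
  {x | ∀ i, |x i - x₀ i| ≤ l / 2}

/-- `𝒫_n`: functions on `ℝ^d` given by polynomials of total degree at most `n`. -/
def PolyLE (d n : ℕ) : Set (EuclideanSpace ℝ (Fin d) → ℝ) :=
  {P | ∃ p : MvPolynomial (Fin d) ℝ, p.totalDegree ≤ n ∧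
    ∀ x, MvPolynomial.eval (fun i => x i) p = P x}

/-- The Campanato-type Zygmund seminorm `‖f‖_{ω,D}` (valued in `ℝ≥0∞`). -/
def zygSeminorm {d : ℕ} (ω : ℝ → ℝ) (n : ℕ) (D : Set (EuclideanSpace ℝ (Fin d)))
    (f : EuclideanSpace ℝ (Fin d) → ℝ) : ℝ≥0∞ :=
  ⨆ (x₀ : EuclideanSpace ℝ (Fin d)) (l : ℝ) (_ : 0 < l) (_ : cube x₀ l ⊆ D),
    ⨅ (P : EuclideanSpace ℝ (Fin d) → ℝ) (_ : P ∈ PolyLE d n),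
      (ENNReal.ofReal (ω l * l ^ d))⁻¹ * ∫⁻ x in cube x₀ l, ENNReal.ofReal |f x - P x|

/-- The `L¹(D)` norm (valued in `ℝ≥0∞`). -/
def l1Norm {d : ℕ} (D : Set (EuclideanSpace ℝ (Fin d)))
    (f : EuclideanSpace ℝ (Fin d) → ℝ) : ℝ≥0∞ :=
  ∫⁻ x in D, ENNReal.ofReal |f x|

/-- The two regularity conditions of order `m` for a modulus of continuity:
`ω(t)/t^q` almost decreasing for some `m ≤ q < m+1`, and `ω(t)/t^r` almost
increasing for some `m-1 < r < m`. -/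
def ModulusConds (ω : ℝ → ℝ) (m : ℕ) : Prop :=
  (∃ q : ℝ, (m : ℝ) ≤ q ∧ q < (m : ℝ) + 1 ∧ ∃ C : ℝ, 0 < C ∧
      ∀ s t : ℝ, 1 < s → 0 < t → ω (s * t) ≤ C * s ^ q * ω t) ∧
  (∃ r : ℝ, (m : ℝ) - 1 < r ∧ r < (m : ℝ) ∧ ∃ C : ℝ, 0 < C ∧
      ∀ s t : ℝ, 0 < s → s < 1 → 0 < t → ω (s * t) ≤ C * s ^ r * ω t)

/-- `ω` is a modulus of continuity of order `n`: continuous, increasing, `ω(0)=0`,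
nonnegative, and `n` is the smallest positive integer satisfying the two
regularity conditions. -/
structure IsModulusOfOrder (ω : ℝ → ℝ) (n : ℕ) : Prop where
  continuousOn : ContinuousOn ω (Set.Ici 0)
  monotoneOn : MonotoneOn ω (Set.Ici 0)
  nonneg : ∀ t, 0 ≤ t → 0 ≤ ω t
  map_zero : ω 0 = 0
  npos : 0 < n
  conds : ModulusConds ω n
  minimal : ∀ m : ℕ, 0 < m → ModulusConds ω m → n ≤ m

/-- `ξ(r) = ∫_r^1 ω(t) t^{-n-1} dt`. -/
def xi (ω : ℝ → ℝ) (n : ℕ) (r : ℝ) : ℝ :=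
  ∫ t in Set.Ioc r 1, ω t / t ^ (n + 1)

/-- The associated modulus of continuity `ω̃(x) = ω(x)/max{1, ξ(x)}`. -/
def omegaTilde (ω : ℝ → ℝ) (n : ℕ) (x : ℝ) : ℝ :=
  ω x / max 1 (xi ω n x)

/-- `D ⊂ ℝ^d` is a bounded Lipschitz domain: it is open, connected, bounded, and near
every boundary point, after a rigid motion, it coincides inside an `R`-window with the
region above the graph of a Lipschitz function (with Lipschitz constant at most `δ`). -/
def IsLipschitzDomain {d : ℕ} (D : Set (EuclideanSpace ℝ (Fin d))) : Prop :=
  IsOpen D ∧ IsConnected D ∧ Bornology.IsBounded D ∧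
  ∃ δ R : ℝ, 0 < δ ∧ 0 < R ∧
    ∀ a ∈ frontier D,
      ∃ (g : EuclideanSpace ℝ (Fin d) ≃ᵢ EuclideanSpace ℝ (Fin d)) (j : Fin d)
        (A : EuclideanSpace ℝ (Fin d) → ℝ),
        g a = 0 ∧
        LipschitzWith (Real.toNNReal δ) A ∧
        (∀ x y : EuclideanSpace ℝ (Fin d), (∀ i, i ≠ j → x i = y i) → A x = A y) ∧
        (g '' D) ∩ cube 0 R = {x ∈ cube (0 : EuclideanSpace ℝ (Fin d)) R | A x < x j}

/-- `Ω` is the density of a `C^k`-smooth homogeneous Calderón–Zygmund kernel: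
homogeneous of degree `0`, `C^k` away from the origin, with zero mean on the
unit sphere. -/
structure IsCZDensity (d : ℕ) (k : ℕ∞) (Ω : EuclideanSpace ℝ (Fin d) → ℝ) : Prop where
  homog : ∀ c : ℝ, 0 < c → ∀ x : EuclideanSpace ℝ (Fin d), Ω (c • x) = Ω x
  smooth : ContDiffOn ℝ k Ω {x : EuclideanSpace ℝ (Fin d) | x ≠ 0}
  meanZero : ∫ x : Metric.sphere (0 : EuclideanSpace ℝ (Fin d)) 1,
      Ω x ∂((volume : Measure (EuclideanSpace ℝ (Fin d))).toSphere) = 0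

/-- `g = T_D f`: `g` vanishes off `D` and, for a.e. `y ∈ D`, `g y` is the principal
value `lim_{ε→0+} ∫_{x ∈ D, |y-x|>ε} f(x) K(y-x) dx` (here `f` is implicitly
multiplied by `χ_D`). -/
def IsRestrictedCZ {d : ℕ} (D : Set (EuclideanSpace ℝ (Fin d)))
    (K : EuclideanSpace ℝ (Fin d) → ℝ) (f g : EuclideanSpace ℝ (Fin d) → ℝ) : Prop :=
  (∀ y, y ∉ D → g y = 0) ∧
  ∀ᵐ y ∂(volume.restrict D),
    Tendsto (fun ε : ℝ => ∫ x in {x ∈ D | ε < dist y x}, f x * K (y - x))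
      (𝓝[>] (0 : ℝ)) (𝓝 (g y))

/-- `P` is a polynomial of near best approximation (with constant `C₀`) for `f`
on the cube with center `x₀` and side length `l`. -/
def IsNearBestApprox {d : ℕ} (ω : ℝ → ℝ) (n : ℕ) (D : Set (EuclideanSpace ℝ (Fin d)))
    (f : EuclideanSpace ℝ (Fin d) → ℝ) (C₀ : ℝ) (x₀ : EuclideanSpace ℝ (Fin d)) (l : ℝ)
    (P : EuclideanSpace ℝ (Fin d) → ℝ) : Prop :=
  P ∈ PolyLE d n ∧
    (ENNReal.ofReal (l ^ d))⁻¹ * ∫⁻ x in cube x₀ l, ENNReal.ofReal |f x - P x| ≤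
      ENNReal.ofReal (C₀ * ω l) * zygSeminorm ω n D f


lemma polyLE_zero (d n : ℕ) : (fun _ => 0 : EuclideanSpace ℝ (Fin d) → ℝ) ∈ PolyLE d n :=
  ⟨0, by simp, by simp⟩

lemma polyLE_add {d n : ℕ} {P Q : EuclideanSpace ℝ (Fin d) → ℝ} (hP : P ∈ PolyLE d n)
    (hQ : Q ∈ PolyLE d n) : (fun x => P x + Q x) ∈ PolyLE d n := by
  obtain ⟨p, hp, hp'⟩ := hP
  obtain ⟨q, hq, hq'⟩ := hQ
  exact ⟨p + q, (MvPolynomial.totalDegree_add p q).trans (max_le hp hq),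
    fun x => by simp [hp', hq']⟩

lemma polyLE_smul {d n : ℕ} {P : EuclideanSpace ℝ (Fin d) → ℝ} (c : ℝ) (hP : P ∈ PolyLE d n) :
    (fun x => c * P x) ∈ PolyLE d n := by
  obtain ⟨p, hp, hp'⟩ := hP
  exact ⟨c • p, (MvPolynomial.totalDegree_smul_le c p).trans hp, fun x => by simp [hp']⟩

lemma polyLE_sum {d n : ℕ} {ι : Type*} (s : Finset ι) {P : ι → EuclideanSpace ℝ (Fin d) → ℝ}
    (hP : ∀ i ∈ s, P i ∈ PolyLE d n) : (fun x => ∑ i ∈ s, P i x) ∈ PolyLE d n := by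
  classical
  induction s using Finset.induction_on with
  | empty => simpa using polyLE_zero d n
  | insert a s ha ih =>
    simp only [Finset.sum_insert ha]
    exact polyLE_add (hP a (by simp)) (ih fun i hi => hP i (by simp [hi]))

lemma polyLE_multilinear {d n k : ℕ} (hk : k ≤ n)
    (m : ContinuousMultilinearMap ℝ (fun _ : Fin k => EuclideanSpace ℝ (Fin d)) ℝ)
    (b : EuclideanSpace ℝ (Fin d)) (c : ℝ) :
    (fun y => m (fun _ => c • (y - b))) ∈ PolyLE d n := by
  classical
  let e : Fin d → EuclideanSpace ℝ (Fin d) := fun i => EuclideanSpace.single i (1 : ℝ)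
  have h1 : ∀ y : EuclideanSpace ℝ (Fin d), m (fun _ => c • (y - b)) =
      ∑ r : Fin k → Fin d, (∏ j, (c * (y (r j) - b (r j)))) * m (fun j => e (r j)) := by
    intro y
    have h2 : c • (y - b) = ∑ i : Fin d, (c * (y i - b i)) • e i := by
      ext j
      simp [e, Finset.sum_apply, Pi.single_apply]
    rw [h2]
    have := m.toMultilinearMap.map_sum (fun (_ : Fin k) (i : Fin d) => (c * (y i - b i)) • e i)
    simp only [ContinuousMultilinearMap.coe_coe] at this
    rw [this]
    refine Finset.sum_congr rfl fun r _ => ?_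
    have := m.map_smul_univ (fun j => c * (y (r j) - b (r j))) (fun j => e (r j))
    rw [this, smul_eq_mul]
  simp_rw [h1]
  refine polyLE_sum _ fun r _ => ?_
  refine ⟨(∏ j, (MvPolynomial.C c * (MvPolynomial.X (r j) - MvPolynomial.C (b (r j))))) *
    MvPolynomial.C (m fun j => e (r j)), ?_, fun x => by simp⟩
  refine (MvPolynomial.totalDegree_mul _ _).trans ?_
  simp only [MvPolynomial.totalDegree_C, add_zero]
  refine (MvPolynomial.totalDegree_finsetProd _ _).trans ?_
  refine le_trans (Finset.sum_le_card_nsmul _ _ 1 ?_) (by simpa using hk)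
  intro j _
  refine (MvPolynomial.totalDegree_mul _ _).trans ?_
  simp only [MvPolynomial.totalDegree_C, zero_add]
  refine (MvPolynomial.totalDegree_sub _ _).trans ?_
  simp [MvPolynomial.totalDegree_X]

lemma polyLE_taylor {d n : ℕ}
    (M : (k : ℕ) → ContinuousMultilinearMap ℝ (fun _ : Fin k => EuclideanSpace ℝ (Fin d)) ℝ)
    (b : EuclideanSpace ℝ (Fin d)) (c : ℝ) :
    (fun y => ∑ k ∈ Finset.range (n + 1), (k.factorial : ℝ)⁻¹ • M k (fun _ => c • (y - b)))
      ∈ PolyLE d n :=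
  polyLE_sum _ fun k hk => by
    simp only [smul_eq_mul]
    exact polyLE_smul _ (polyLE_multilinear (by simp at hk; omega) _ _ _)

lemma euclid_norm_le_sum {d : ℕ} (x : EuclideanSpace ℝ (Fin d)) : ‖x‖ ≤ ∑ i, |x i| := by
  rw [EuclideanSpace.norm_eq]
  refine Real.sqrt_le_iff.2 ⟨Finset.sum_nonneg fun _ _ => abs_nonneg _, ?_⟩
  simp only [Real.norm_eq_abs]
  exact Finset.sum_sq_le_sq_sum_of_nonneg fun _ _ => abs_nonneg _

lemma cube_norm_le {d : ℕ} {x₀ x : EuclideanSpace ℝ (Fin d)} {l : ℝ} (hx : x ∈ cube x₀ l) :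
    ‖x - x₀‖ ≤ d * (l / 2) := by
  refine (euclid_norm_le_sum _).trans ?_
  refine (Finset.sum_le_card_nsmul _ _ (l / 2) fun i _ => ?_).trans (by simp)
  simpa using hx i

lemma cube_volume {d : ℕ} (x₀ : EuclideanSpace ℝ (Fin d)) {l : ℝ} (hl : 0 < l) :
    volume (cube x₀ l) = ENNReal.ofReal (l ^ d) := by
  have h : cube x₀ l = (WithLp.ofLp) ⁻¹' (Set.Icc (fun i => x₀ i - l / 2) (fun i => x₀ i + l / 2)) := by
    ext x
    simp only [cube, mem_ofPred_eq, mem_preimage, mem_Icc, Pi.le_def, abs_le]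
    constructor
    · intro h
      exact ⟨fun i => by linarith [(h i).1], fun i => by linarith [(h i).2]⟩
    · rintro ⟨h1, h2⟩ i
      exact ⟨by linarith [h1 i], by linarith [h2 i]⟩
  rw [h, (PiLp.volume_preserving_ofLp (Fin d)).measure_preimage
    measurableSet_Icc.nullMeasurableSet, Real.volume_Icc_pi]
  simp [← ENNReal.ofReal_pow hl.le]

lemma cube_isClosed {d : ℕ} (x₀ : EuclideanSpace ℝ (Fin d)) (l : ℝ) : IsClosed (cube x₀ l) := by
  have : cube x₀ l = ⋂ i, {x | |x i - x₀ i| ≤ l / 2} := by ext; simp [cube]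
  rw [this]
  exact isClosed_iInter fun i => isClosed_le (by fun_prop) continuous_const

lemma taylor_bound {d n : ℕ} {F : EuclideanSpace ℝ (Fin d) → ℝ} {a v : EuclideanSpace ℝ (Fin d)}
    {B : ℝ} (hF : ∀ t ∈ Set.Icc (0 : ℝ) 1, ContDiffAt ℝ (n + 1) F (a + t • v))
    (hB : ∀ t ∈ Set.Icc (0 : ℝ) 1, ‖iteratedFDeriv ℝ (n + 1) F (a + t • v)‖ ≤ B) :
    |F (a + v) - ∑ k ∈ Finset.range (n + 1), (k.factorial : ℝ)⁻¹ • iteratedFDeriv ℝ k F a (fun _ => v)|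
      ≤ B * ‖v‖ ^ (n + 1) := by
  have hB0 : 0 ≤ B := (norm_nonneg _).trans (hB 0 (by simp))
  rw [map_add_eq_sum_add_integral_iteratedFDeriv hF, add_sub_cancel_left]
  have h1 : ‖∫ t in (0 : ℝ)..1, (1 - t) ^ n • iteratedFDeriv ℝ (n + 1) F (a + t • v) (fun _ => v)‖
      ≤ (B * ‖v‖ ^ (n + 1)) * |1 - 0| := by
    refine intervalIntegral.norm_integral_le_of_norm_le_const fun t ht => ?_
    rw [uIoc_of_le zero_le_one] at ht
    have ht' : t ∈ Set.Icc (0 : ℝ) 1 := ⟨ht.1.le, ht.2⟩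
    rw [norm_smul]
    have h2 : ‖(1 - t) ^ n‖ ≤ 1 := by
      rw [norm_pow]
      refine pow_le_one₀ (norm_nonneg _) ?_
      rw [Real.norm_eq_abs, abs_le]; constructor <;> linarith [ht'.1, ht'.2]
    have h3 : ‖iteratedFDeriv ℝ (n + 1) F (a + t • v) (fun _ => v)‖ ≤ B * ‖v‖ ^ (n + 1) := by
      refine (ContinuousMultilinearMap.le_opNorm _ _).trans ?_
      simp only [Finset.prod_const, Finset.card_univ, Fintype.card_fin]
      gcongr
      exact hB t ht'
    calc _ ≤ 1 * (B * ‖v‖ ^ (n + 1)) := by gcongr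
      _ = _ := one_mul _
  rw [← Real.norm_eq_abs, norm_smul]
  have h4 : ‖(n.factorial : ℝ)⁻¹‖ ≤ 1 := by
    rw [norm_inv, RCLike.norm_natCast]
    exact inv_le_one_of_one_le₀ (by exact_mod_cast n.factorial_pos)
  calc _ ≤ 1 * ((B * ‖v‖ ^ (n + 1)) * |1 - 0|) := by gcongr
    _ = _ := by simp

lemma taylorApprox_smooth {d n : ℕ} {F : EuclideanSpace ℝ (Fin d) → ℝ}
    (hF : ContDiff ℝ (n + 1) F) (hc : HasCompactSupport F) :
    ∃ B : ℝ, 0 ≤ B ∧ ∀ (x₀ xR : EuclideanSpace ℝ (Fin d)) (c : ℝ), ∃ T ∈ PolyLE d n,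
      ∀ x, |F (c • (x - x₀)) - T x| ≤ B * ‖c • (x - xR)‖ ^ (n + 1) := by
  obtain ⟨B, hB⟩ := (hc.iteratedFDeriv (𝕜 := ℝ) (n + 1)).exists_bound_of_continuous
    (hF.continuous_iteratedFDeriv le_rfl)
  refine ⟨B, (norm_nonneg _).trans (hB 0), fun x₀ xR c => ?_⟩
  refine ⟨_, polyLE_taylor (n := n) (fun k => iteratedFDeriv ℝ k F (c • (xR - x₀))) xR c, fun x => ?_⟩
  have := taylor_bound (n := n) (F := F) (a := c • (xR - x₀)) (v := c • (x - xR))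
    (fun t _ => hF.contDiffAt) (fun t _ => hB _)
  rwa [← smul_add, show xR - x₀ + (x - xR) = x - x₀ by abel] at this

lemma geo_sum_small {β s : ℝ} (hβ : 0 < β) (hs : 0 < s) (m : ℕ) :
    ∑ k ∈ Finset.range m, (if 2 ^ k * s ≤ 1 then (2 ^ k * s) ^ β else 0)
      ≤ 2 ^ β / (2 ^ β - 1) := by
  have h1 : (1 : ℝ) < 2 ^ β := Real.one_lt_rpow one_lt_two hβ
  have h0 : (0 : ℝ) < 2 ^ β - 1 := by linarith
  have key : ∑ k ∈ Finset.range m, (if 2 ^ k * s ≤ 1 then (2 ^ k * s) ^ β else 0)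
      ≤ (min (2 ^ m * s) 2) ^ β / (2 ^ β - 1) := by
    induction m with
    | zero => simp; positivity
    | succ m ih =>
      rw [Finset.sum_range_succ]
      have hx : 0 < 2 ^ m * s := by positivity
      by_cases h : 2 ^ m * s ≤ 1
      · rw [if_pos h]
        have e1 : min (2 ^ m * s) 2 = 2 ^ m * s := min_eq_left (by linarith)
        have e2 : min (2 ^ (m + 1) * s) 2 = 2 * (2 ^ m * s) := by
          rw [pow_succ]; rw [min_eq_left (by linarith)]; ring
        rw [e1] at ih
        rw [e2, Real.mul_rpow (by norm_num) hx.le]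
        rw [le_div_iff₀ h0] at ih ⊢
        linarith
      · rw [if_neg h, add_zero]
        refine ih.trans ?_
        gcongr
        · norm_num
        · exact Nat.le_succ m
  refine key.trans ?_
  gcongr
  exact min_le_right _ _

lemma geo_sum_large {r s : ℝ} (hr : 0 < r) (hs : 0 < s) (m : ℕ) :
    ∑ k ∈ Finset.range m, (if 2 ^ k * s ≤ 1 then 0 else (2 ^ k * s) ^ (-r))
      ≤ 1 / (1 - 2 ^ (-r)) := by
  have h1 : (2 : ℝ) ^ (-r) < 1 := Real.rpow_lt_one_of_one_lt_of_neg one_lt_two (by linarith)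
  have h0 : (0 : ℝ) < 1 - 2 ^ (-r) := by linarith
  have key : ∑ k ∈ Finset.range m, (if 2 ^ k * s ≤ 1 then 0 else (2 ^ k * s) ^ (-r))
      ≤ (1 - min 1 ((2 ^ m * s) ^ (-r))) / (1 - 2 ^ (-r)) := by
    induction m with
    | zero =>
      simp only [Finset.range_zero, Finset.sum_empty]
      exact div_nonneg (by linarith [min_le_left (1 : ℝ) ((2 ^ 0 * s) ^ (-r))]) h0.le
    | succ m ih =>
      rw [Finset.sum_range_succ]
      have hx : 0 < 2 ^ m * s := by positivity
      have e3 : (2 ^ (m + 1) * s) ^ (-r) = 2 ^ (-r) * (2 ^ m * s) ^ (-r) := by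
        rw [← Real.mul_rpow (by norm_num) hx.le]; congr 1; ring
      have hy : 0 < (2 ^ m * s) ^ (-r) := Real.rpow_pos_of_pos hx _
      by_cases h : 2 ^ m * s ≤ 1
      · rw [if_pos h, add_zero]
        refine ih.trans ?_
        have : 2 ^ (-r) * (2 ^ m * s) ^ (-r) ≤ (2 ^ m * s) ^ (-r) := by nlinarith
        rw [e3]
        gcongr
      · rw [if_neg h]
        push Not at h
        have h5 : (2 ^ m * s) ^ (-r) < 1 := Real.rpow_lt_one_of_one_lt_of_neg h (by linarith)
        rw [min_eq_right h5.le] at ih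
        rw [e3, min_eq_right (by nlinarith)]
        rw [le_div_iff₀ h0] at ih ⊢
        nlinarith
  refine key.trans ?_
  gcongr
  have : 0 ≤ min 1 ((2 ^ m * s) ^ (-r)) := by positivity
  linarith

lemma modulus_sum {ω : ℝ → ℝ} {n : ℕ} (hω : IsModulusOfOrder ω n) :
    ∃ C : ℝ, 0 < C ∧ ∀ s : ℝ, 0 < s → ∀ m : ℕ,
      ∑ k ∈ Finset.range m, ω ((2 ^ k)⁻¹) * (if 2 ^ k * s ≤ 1 then (2 ^ k * s) ^ (n + 1) else 1)
        ≤ C * ω s := by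
  obtain ⟨⟨q, hq1, hq2, C1, hC1, h1⟩, ⟨r, hr1, hr2, C2, hC2, h2⟩⟩ := hω.conds
  have hn := hω.npos
  have hn' : (1 : ℝ) ≤ n := by exact_mod_cast hn
  have hr : 0 < r := by linarith
  set β := (n : ℝ) + 1 - q with hβd
  have hβ : 0 < β := by rw [hβd]; linarith
  set A := (2 : ℝ) ^ β / (2 ^ β - 1)
  set A' := 1 / (1 - (2 : ℝ) ^ (-r))
  have hb1 : (1 : ℝ) < 2 ^ β := Real.one_lt_rpow one_lt_two hβ
  have hA : 0 < A := div_pos (by linarith) (by linarith)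
  have hb2 : (2 : ℝ) ^ (-r) < 1 := Real.rpow_lt_one_of_one_lt_of_neg one_lt_two (by linarith)
  have hA' : 0 < A' := div_pos one_pos (by linarith)
  refine ⟨max C1 1 * A + C2 * A', by positivity, fun s hs m => ?_⟩
  have hωs := hω.nonneg s hs.le
  have hterm : ∀ k : ℕ, ω ((2 ^ k)⁻¹) * (if 2 ^ k * s ≤ 1 then (2 ^ k * s) ^ (n + 1) else 1) ≤
      (max C1 1 * ω s) * (if 2 ^ k * s ≤ 1 then (2 ^ k * s) ^ β else 0) +
      (C2 * ω s) * (if 2 ^ k * s ≤ 1 then 0 else (2 ^ k * s) ^ (-r)) := by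
    intro k
    have hx : 0 < 2 ^ k * s := by positivity
    have e : ((2 : ℝ) ^ k)⁻¹ = (2 ^ k * s)⁻¹ * s := by field_simp
    rw [e]
    set x := 2 ^ k * s
    by_cases h : x ≤ 1
    · simp only [if_pos h, mul_zero, add_zero]
      have h3 : ω (x⁻¹ * s) ≤ max C1 1 * (x⁻¹) ^ q * ω s := by
        rcases h.lt_or_eq with h | h
        · refine (h1 _ _ (one_lt_inv_iff₀.2 ⟨hx, h⟩) hs).trans ?_
          gcongr
          exact le_max_left _ _
        · rw [h]; simp; nlinarith [le_max_right C1 1]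
      calc _ ≤ (max C1 1 * (x⁻¹) ^ q * ω s) * x ^ (n + 1) := by gcongr
        _ = max C1 1 * ω s * ((x⁻¹) ^ q * x ^ (n + 1)) := by ring
        _ = _ := by
          congr 1
          rw [Real.inv_rpow hx.le, ← Real.rpow_neg hx.le, ← Real.rpow_natCast, ← Real.rpow_add hx]
          congr 1; push_cast; rw [hβd]; ring
    · simp only [if_neg h, mul_zero, zero_add, mul_one]
      push Not at h
      refine (h2 _ _ (inv_pos.2 hx) (inv_lt_one_of_one_lt₀ h) hs).trans (le_of_eq ?_)
      rw [Real.inv_rpow hx.le, ← Real.rpow_neg hx.le]; ring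
  calc _ ≤ _ := Finset.sum_le_sum fun k _ => hterm k
    _ = (max C1 1 * ω s) * (∑ k ∈ Finset.range m, (if 2 ^ k * s ≤ 1 then (2 ^ k * s) ^ β else 0)) +
      (C2 * ω s) * ∑ k ∈ Finset.range m, (if 2 ^ k * s ≤ 1 then 0 else (2 ^ k * s) ^ (-r)) := by
      rw [Finset.sum_add_distrib, Finset.mul_sum, Finset.mul_sum]
    _ ≤ (max C1 1 * ω s) * A + (C2 * ω s) * A' := by
      gcongr
      · exact geo_sum_small hβ hs m
      · exact geo_sum_large hr hs m
    _ = _ := by ring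


lemma eval_homog {d n : ℕ} {p : MvPolynomial (Fin d) ℝ} (hp : p.IsHomogeneous n) (w : Fin d → ℝ) :
    MvPolynomial.eval w p = ∑ α ∈ Finset.finsuppAntidiag (Finset.univ : Finset (Fin d)) n,
      p.coeff α * ∏ i, w i ^ α i := by
  rw [MvPolynomial.eval_eq']
  refine Finset.sum_subset ?_ ?_
  · intro α hα
    rw [MvPolynomial.mem_support_iff] at hα
    have := hp hα
    rw [Finset.mem_finsuppAntidiag]
    refine ⟨?_, by simp⟩
    rw [← this, Finsupp.weight_apply, Finsupp.sum_fintype]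
    · simp
    · simp
  · intro α _ hα
    rw [MvPolynomial.notMem_support_iff] at hα
    simp [hα]

lemma fd_sum (a k : ℕ) (u : ℝ) :
    ∑ j ∈ Finset.range (a + 1), ((-1 : ℝ) ^ (a - j) * (a.choose j : ℝ)) * (u + j) ^ k =
      (fwdDiff (1 : ℝ))^[a] (fun r : ℝ => r ^ k) u := by
  rw [fwdDiff_iter_eq_sum_shift]
  refine Finset.sum_congr rfl fun j _ => ?_
  simp [zsmul_eq_mul]

lemma coeff_bound {d n : ℕ} {D : Set (EuclideanSpace ℝ (Fin d))} (hDo : IsOpen D)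
    (hDn : D.Nonempty) :
    ∃ C : ℝ, 0 < C ∧ ∀ (x₀ : EuclideanSpace ℝ (Fin d)) (p : MvPolynomial (Fin d) ℝ) (M : ℝ),
      p.IsHomogeneous n → (∀ x ∈ D, |MvPolynomial.eval (fun i => x i - x₀ i) p| ≤ M) →
      ∀ α ∈ Finset.finsuppAntidiag (Finset.univ : Finset (Fin d)) n, |p.coeff α| ≤ C * M := by
  classical
  obtain ⟨z, hz⟩ := hDn
  obtain ⟨ρ, hρ, hball⟩ := Metric.isOpen_iff.1 hDo z hz
  set τ : ℝ := ρ / (2 * (d * n + 1)) with hτd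
  have hτ : 0 < τ := by positivity
  have hτ2 : d * (n * τ) < ρ := by
    rw [hτd]
    have : (0 : ℝ) < d * n + 1 := by positivity
    rw [show (d : ℝ) * (n * (ρ / (2 * (d * n + 1)))) = ρ * ((d * n) / (2 * (d * n + 1))) by ring]
    have : ((d : ℝ) * n) / (2 * (d * n + 1)) < 1 := by
      rw [div_lt_one (by positivity)]; nlinarith
    nlinarith
  set W : (Fin d →₀ ℕ) → (Fin d → ℕ) → ℝ := fun α j =>
    ∏ i, ((-1 : ℝ) ^ (α i - j i) * ((α i).choose (j i) : ℝ)) with hW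
  set S : (Fin d →₀ ℕ) → ℝ := fun α =>
    ∑ j ∈ Fintype.piFinset (fun i => Finset.range (α i + 1)), |W α j| with hS
  have hS0 : ∀ α, 0 ≤ S α := fun α => Finset.sum_nonneg fun _ _ => abs_nonneg _
  set I := Finset.finsuppAntidiag (Finset.univ : Finset (Fin d)) n with hI
  refine ⟨(∑ α ∈ I, S α) / τ ^ n + 1, by positivity [Finset.sum_nonneg fun α (_ : α ∈ I) => hS0 α], ?_⟩
  intro x₀ p M hp hM α hα
  have hM0 : 0 ≤ M := (abs_nonneg _).trans (hM z hz)
  have hsum : ∀ γ ∈ I, ∑ i, γ i = n := fun γ hγ => (Finset.mem_finsuppAntidiag.1 hγ).1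
  have hle : ∀ γ ∈ I, ∀ i, γ i ≤ n := fun γ hγ i => by
    rw [← hsum γ hγ]; exact Finset.single_le_sum (fun _ _ => Nat.zero_le _) (Finset.mem_univ i)
  -- the finite difference identity
  have hid : ∑ j ∈ Fintype.piFinset (fun i => Finset.range (α i + 1)),
      W α j * MvPolynomial.eval (fun i => z i + τ * j i - x₀ i) p =
      p.coeff α * (τ ^ n * ∏ i, ((α i).factorial : ℝ)) := by
    have h1 : ∀ j : Fin d → ℕ, W α j * MvPolynomial.eval (fun i => z i + τ * j i - x₀ i) p =
        ∑ γ ∈ I, p.coeff γ * (τ ^ n * ∏ i, (((-1 : ℝ) ^ (α i - j i) * ((α i).choose (j i) : ℝ)) *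
          ((z i - x₀ i) / τ + j i) ^ γ i)) := by
      intro j
      rw [eval_homog hp, Finset.mul_sum]
      refine Finset.sum_congr rfl fun γ hγ => ?_
      have h2 : ∏ i, (z i + τ * j i - x₀ i) ^ γ i = τ ^ n * ∏ i, ((z i - x₀ i) / τ + j i) ^ γ i := by
        rw [← hsum γ hγ, ← Finset.prod_pow_eq_pow_sum, ← Finset.prod_mul_distrib]
        refine Finset.prod_congr rfl fun i _ => ?_
        rw [← mul_pow]
        congr 1
        field_simp
        ring
      rw [h2, Finset.prod_mul_distrib]
      ring
    simp_rw [h1]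
    rw [Finset.sum_comm, Finset.sum_eq_single α]
    · rw [← Finset.mul_sum, ← Finset.mul_sum, ← Finset.prod_univ_sum
        (t := fun i => Finset.range (α i + 1))
        (f := fun i (j : ℕ) => (((-1 : ℝ) ^ (α i - j) * ((α i).choose j : ℝ)) *
          ((z i - x₀ i) / τ + j) ^ α i))]
      congr 2
      refine Finset.prod_congr rfl fun i _ => ?_
      rw [fd_sum, fwdDiff_iter_eq_factorial]
      simp
    · intro γ hγ hne
      rw [← Finset.mul_sum, ← Finset.mul_sum, ← Finset.prod_univ_sum
        (t := fun i => Finset.range (α i + 1))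
        (f := fun i (j : ℕ) => (((-1 : ℝ) ^ (α i - j) * ((α i).choose j : ℝ)) *
          ((z i - x₀ i) / τ + j) ^ γ i))]
      have : ∃ i, γ i < α i := by
        by_contra hcon
        push Not at hcon
        apply hne
        have := (Finset.sum_eq_sum_iff_of_le (fun i (_ : i ∈ Finset.univ) => hcon i)).1
          (by rw [hsum α hα, hsum γ hγ])
        ext i
        exact (this i (Finset.mem_univ i)).symm
      obtain ⟨i, hi⟩ := this
      rw [Finset.prod_eq_zero (Finset.mem_univ i)]
      · simp
      · rw [fd_sum, fwdDiff_iter_pow_eq_zero_of_lt hi]; rfl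
    · intro h; exact absurd hα h
  have hb : |p.coeff α * (τ ^ n * ∏ i, ((α i).factorial : ℝ))| ≤ S α * M := by
    rw [← hid, hS, Finset.sum_mul]
    refine (Finset.abs_sum_le_sum_abs _ _).trans (Finset.sum_le_sum fun j hj => ?_)
    rw [abs_mul]
    refine mul_le_mul_of_nonneg_left ?_ (abs_nonneg _)
    let y : EuclideanSpace ℝ (Fin d) := WithLp.toLp 2 (fun i => z i + τ * j i)
    refine hM y (hball ?_)
    rw [mem_ball, dist_eq_norm]
    refine ((euclid_norm_le_sum _).trans ?_).trans_lt hτ2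
    refine (Finset.sum_le_card_nsmul _ _ (n * τ) fun i _ => ?_).trans (by simp)
    have hj' := Fintype.mem_piFinset.1 hj i
    have : j i ≤ n := by
      have := hle α hα i
      simp at hj'; omega
    have h' : (j i : ℝ) ≤ n := by exact_mod_cast this
    simp only [y, PiLp.sub_apply, add_sub_cancel_left]
    rw [abs_of_nonneg (by positivity)]
    nlinarith
  have hfac : (1 : ℝ) ≤ ∏ i, ((α i).factorial : ℝ) := by
    have : 1 ≤ ∏ i, (α i).factorial := Finset.prod_pos fun i _ => (α i).factorial_pos
    exact_mod_cast this
  rw [abs_mul, abs_of_pos (by positivity : 0 < τ ^ n * ∏ i, ((α i).factorial : ℝ))] at hb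
  have hτn : 0 < τ ^ n := by positivity
  have hb2 : |p.coeff α| * τ ^ n ≤ (∑ α ∈ I, S α) * M := by
    calc |p.coeff α| * τ ^ n ≤ |p.coeff α| * (τ ^ n * ∏ i, ((α i).factorial : ℝ)) := by
          gcongr
          nlinarith
      _ ≤ S α * M := hb
      _ ≤ _ := by
        gcongr
        exact Finset.single_le_sum (fun γ _ => hS0 γ) hα
  rw [← le_div_iff₀ hτn] at hb2
  calc _ ≤ _ := hb2
    _ = (∑ α ∈ I, S α) / τ ^ n * M := by ring
    _ ≤ _ := by nlinarith


lemma kernel_contDiffAt {d n : ℕ} {Ω K : EuclideanSpace ℝ (Fin d) → ℝ}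
    (hΩ : IsCZDensity d ((n : ℕ∞) + 1) Ω) (hK : K = fun x => Ω x / ‖x‖ ^ d)
    {z : EuclideanSpace ℝ (Fin d)} (hz : z ≠ 0) : ContDiffAt ℝ (n + 1) K z := by
  subst hK
  have h1 : ContDiffAt ℝ (n + 1) Ω z := by
    have := (hΩ.smooth z hz).contDiffAt (isOpen_ne.mem_nhds hz)
    exact_mod_cast this
  exact h1.div ((contDiffAt_norm ℝ hz).pow d) (pow_ne_zero _ (norm_ne_zero_iff.2 hz))

lemma kernel_homog {d : ℕ} {k : ℕ∞} {Ω K : EuclideanSpace ℝ (Fin d) → ℝ}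
    (hΩ : IsCZDensity d k Ω) (hK : K = fun x => Ω x / ‖x‖ ^ d)
    {c : ℝ} (hc : 0 < c) (z : EuclideanSpace ℝ (Fin d)) : K (c • z) = (c ^ d)⁻¹ * K z := by
  subst hK
  simp only [hΩ.homog c hc z, norm_smul, Real.norm_eq_abs, abs_of_pos hc, mul_pow]
  rw [div_eq_mul_inv, mul_inv, div_eq_mul_inv]
  ring

lemma kernel_deriv_continuousAt {d n m : ℕ} (hm : m ≤ n + 1) {Ω K : EuclideanSpace ℝ (Fin d) → ℝ}
    (hΩ : IsCZDensity d ((n : ℕ∞) + 1) Ω) (hK : K = fun x => Ω x / ‖x‖ ^ d)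
    {z : EuclideanSpace ℝ (Fin d)} (hz : z ≠ 0) : ContinuousAt (iteratedFDeriv ℝ m K) z := by
  have h : ContDiffAt ℝ m K z := (kernel_contDiffAt hΩ hK hz).of_le (by exact_mod_cast hm)
  exact (h.iteratedFDeriv_right (i := m) (m := 0) (by simp)).continuousAt

lemma kernel_deriv_bound {d n m : ℕ} (hm : m ≤ n + 1) {Ω K : EuclideanSpace ℝ (Fin d) → ℝ}
    (hΩ : IsCZDensity d ((n : ℕ∞) + 1) Ω) (hK : K = fun x => Ω x / ‖x‖ ^ d) :
    ∃ C : ℝ, 0 < C ∧ ∀ z : EuclideanSpace ℝ (Fin d), z ≠ 0 →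
      ‖iteratedFDeriv ℝ m K z‖ ≤ C * (‖z‖ ^ (d + m))⁻¹ := by
  have hcont : ContinuousOn (iteratedFDeriv ℝ m K) (Metric.sphere 0 1) := fun z hz =>
    (kernel_deriv_continuousAt hm hΩ hK (by rintro rfl; simp at hz)).continuousWithinAt
  obtain ⟨B, hB⟩ := (isCompact_sphere (0 : EuclideanSpace ℝ (Fin d)) 1).exists_bound_of_continuousOn hcont
  refine ⟨|B| + 1, by positivity, fun z hz => ?_⟩
  have hρ : 0 < ‖z‖ := norm_pos_iff.2 hz
  set ρ := ‖z‖ with hρd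
  let g : EuclideanSpace ℝ (Fin d) ≃L[ℝ] EuclideanSpace ℝ (Fin d) :=
    ContinuousLinearEquiv.smulLeft (Units.mk0 ρ⁻¹ (inv_ne_zero hρ.ne'))
  have hg : ∀ w, g w = ρ⁻¹ • w := fun w => rfl
  have hgz : g z ∈ Metric.sphere (0 : EuclideanSpace ℝ (Fin d)) 1 := by
    rw [hg, mem_sphere_zero_iff_norm, norm_smul, norm_inv, norm_norm]
    exact inv_mul_cancel₀ hρ.ne'
  have hgz0 : g z ≠ 0 := by rw [hg]; exact smul_ne_zero (inv_ne_zero hρ.ne') hz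
  have hKe : K = fun w => ((ρ ^ d)⁻¹ : ℝ) • (K ∘ g) w := by
    funext w
    simp only [Function.comp, hg, smul_eq_mul]
    rw [kernel_homog hΩ hK (inv_pos.2 hρ), ← mul_assoc]
    rw [inv_pow, inv_inv, inv_mul_cancel₀ (by positivity), one_mul]
  have hcd : ContDiffAt ℝ m (K ∘ g) z := by
    have h : ContDiffAt ℝ m K (g z) := (kernel_contDiffAt hΩ hK hgz0).of_le (by exact_mod_cast hm)
    exact h.comp z g.contDiff.contDiffAt
  have h2 : iteratedFDeriv ℝ m K z = (ρ ^ d)⁻¹ • (iteratedFDeriv ℝ m K (g z)).compContinuousLinearMap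
      (fun _ => (g : EuclideanSpace ℝ (Fin d) →L[ℝ] EuclideanSpace ℝ (Fin d))) := by
    conv_lhs => rw [hKe]
    rw [iteratedFDeriv_const_smul_apply' hcd]
    congr 1
    have := g.iteratedFDerivWithin_comp_right K uniqueDiffOn_univ (mem_univ (g z)) m
    simpa [iteratedFDerivWithin_univ] using this
  rw [h2, norm_smul]
  have hgn : ‖(g : EuclideanSpace ℝ (Fin d) →L[ℝ] EuclideanSpace ℝ (Fin d))‖ ≤ ρ⁻¹ := by
    refine ContinuousLinearMap.opNorm_le_bound _ (by positivity) fun w => ?_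
    simp only [ContinuousLinearEquiv.coe_coe, hg, norm_smul, norm_inv, Real.norm_eq_abs, abs_of_pos hρ, le_refl]
  have h3 := ContinuousMultilinearMap.norm_compContinuousLinearMap_le (iteratedFDeriv ℝ m K (g z))
    (fun _ => (g : EuclideanSpace ℝ (Fin d) →L[ℝ] EuclideanSpace ℝ (Fin d)))
  simp only [Finset.prod_const, Finset.card_univ, Fintype.card_fin] at h3
  have h4 : ‖iteratedFDeriv ℝ m K (g z)‖ ≤ |B| + 1 := (hB _ hgz).trans (by linarith [le_abs_self B])
  calc _ ≤ ‖(ρ ^ d)⁻¹‖ * ((|B| + 1) * (ρ⁻¹) ^ m) := by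
        refine mul_le_mul_of_nonneg_left (h3.trans ?_) (norm_nonneg _)
        gcongr
    _ = _ := by
      rw [norm_inv, norm_pow, Real.norm_eq_abs, abs_of_pos hρ, pow_add, mul_inv, inv_pow]; ring

lemma kernel_bound {d n : ℕ} {Ω K : EuclideanSpace ℝ (Fin d) → ℝ}
    (hΩ : IsCZDensity d ((n : ℕ∞) + 1) Ω) (hK : K = fun x => Ω x / ‖x‖ ^ d) :
    ∃ C : ℝ, 0 < C ∧ ∀ z : EuclideanSpace ℝ (Fin d), z ≠ 0 → |K z| ≤ C * (‖z‖ ^ d)⁻¹ := by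
  obtain ⟨C, hC, h⟩ := kernel_deriv_bound (m := 0) (Nat.zero_le _) hΩ hK
  refine ⟨C, hC, fun z hz => ?_⟩
  have := h z hz
  rwa [norm_iteratedFDeriv_zero, add_zero] at this

lemma kernel_measurable {d n : ℕ} {Ω K : EuclideanSpace ℝ (Fin d) → ℝ}
    (hΩ : IsCZDensity d ((n : ℕ∞) + 1) Ω) (hK : K = fun x => Ω x / ‖x‖ ^ d) :
    Measurable K :=
  measurable_of_continuousOn_compl_singleton 0 fun z hz =>
    (kernel_contDiffAt hΩ hK hz).continuousAt.continuousWithinAt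

lemma tail_integral (d : ℕ) : ∃ C : ℝ, 0 < C ∧ ∀ (x₀ : EuclideanSpace ℝ (Fin d)) (r : ℝ), 0 < r →
    Integrable ({x | r ≤ ‖x - x₀‖}.indicator fun x => (‖x - x₀‖ ^ (d + 1))⁻¹) ∧
    ∫ x, ({x | r ≤ ‖x - x₀‖}.indicator (fun x => (‖x - x₀‖ ^ (d + 1))⁻¹) x) ≤ C * r⁻¹ := by
  let g : EuclideanSpace ℝ (Fin d) → ℝ := fun u => (1 + ‖u‖) ^ (-((d : ℝ) + 1))
  have hg : Integrable g := integrable_one_add_norm (by simp)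
  have hg0 : ∀ u, 0 ≤ g u := fun u => by positivity
  set J := ∫ u, g u with hJ
  have hJ0 : 0 ≤ J := integral_nonneg hg0
  refine ⟨2 ^ (d + 1) * J + 1, by positivity, fun x₀ r hr => ?_⟩
  have hge : ∀ u, g u = ((1 + ‖u‖) ^ (d + 1))⁻¹ := fun u => by
    simp only [g]
    rw [Real.rpow_neg (by positivity)]
    norm_cast
  set maj : EuclideanSpace ℝ (Fin d) → ℝ := fun x => (2 ^ (d + 1) * (r ^ (d + 1))⁻¹) * g (r⁻¹ • (x - x₀))
    with hmaj
  have hMajI : Integrable maj := by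
    refine Integrable.const_mul ?_ _
    exact (hg.comp_smul (inv_ne_zero hr.ne')).comp_sub_right x₀
  have hle : ∀ x, ({x | r ≤ ‖x - x₀‖}.indicator (fun x => (‖x - x₀‖ ^ (d + 1))⁻¹) x) ≤ maj x := by
    intro x
    by_cases hx : r ≤ ‖x - x₀‖
    · rw [indicator_of_mem (by exact hx)]
      simp only [hmaj, hge, norm_smul, norm_inv, Real.norm_eq_abs, abs_of_pos hr]
      have hpos : 0 < ‖x - x₀‖ := hr.trans_le hx
      have h1 : (r * (1 + r⁻¹ * ‖x - x₀‖)) ^ (d + 1) ≤ (2 * ‖x - x₀‖) ^ (d + 1) := by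
        have e : r * (1 + r⁻¹ * ‖x - x₀‖) = r + ‖x - x₀‖ := by
          rw [mul_add, ← mul_assoc, mul_inv_cancel₀ hr.ne']; ring
        rw [e]
        exact pow_le_pow_left₀ (by positivity) (by linarith) _
      rw [mul_assoc, ← mul_inv, ← mul_pow, ← div_eq_mul_inv, inv_eq_one_div,
        div_le_div_iff₀ (by positivity) (by positivity), ← mul_pow, one_mul]
      exact h1
    · rw [indicator_of_notMem (by exact hx)]
      exact mul_nonneg (by positivity) (hg0 _)
  have hnn : ∀ x, 0 ≤ ({x | r ≤ ‖x - x₀‖}.indicator (fun x => (‖x - x₀‖ ^ (d + 1))⁻¹) x) := fun x =>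
    indicator_nonneg (fun _ _ => by positivity) x
  have hmeas : Measurable ({x | r ≤ ‖x - x₀‖}.indicator fun x => (‖x - x₀‖ ^ (d + 1))⁻¹) := by
    refine Measurable.indicator (by fun_prop) ?_
    exact measurableSet_le measurable_const (by fun_prop)
  have hTailI := hMajI.mono' hmeas.aestronglyMeasurable (ae_of_all _ fun x => by
    rw [Real.norm_eq_abs, abs_of_nonneg (hnn x)]; exact hle x)
  refine ⟨hTailI, (integral_mono hTailI hMajI hle).trans ?_⟩
  have : ∫ x, maj x = (2 ^ (d + 1) * (r ^ (d + 1))⁻¹) * (r ^ d * J) := by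
    rw [hmaj, integral_const_mul]
    congr 1
    rw [integral_sub_right_eq_self (fun x => g (r⁻¹ • x)) x₀,
      Measure.integral_comp_inv_smul_of_nonneg _ _ hr.le]
    simp [hJ]
  rw [this]
  have : (2 ^ (d + 1) * (r ^ (d + 1))⁻¹) * (r ^ d * J) = 2 ^ (d + 1) * J * r⁻¹ := by
    field_simp
    ring
  rw [this]
  gcongr
  linarith

lemma weak_sing_integrable {d : ℕ} (hd : 0 < d) (y : EuclideanSpace ℝ (Fin d)) (R : ℝ) :
    IntegrableOn (fun x => ‖x - y‖ * (‖x - y‖ ^ d)⁻¹) (Metric.ball y R) := by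
  haveI : Nonempty (Fin d) := ⟨⟨0, hd⟩⟩
  haveI : Nontrivial (EuclideanSpace ℝ (Fin d)) := by infer_instance
  have h0 : IntegrableOn (fun x : EuclideanSpace ℝ (Fin d) => ‖x‖ * (‖x‖ ^ d)⁻¹) (Metric.ball 0 R) := by
    rw [integrableOn_fun_norm_addHaar volume (f := fun t => t * (t ^ d)⁻¹)]
    have : IntegrableOn (fun _ : ℝ => (1 : ℝ)) (Ioo 0 R) := by
      exact integrableOn_const (by simp)
    refine this.congr_fun (fun t ht => ?_) measurableSet_Ioo
    have ht0 : 0 < t := ht.1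
    simp only [finrank_euclideanSpace, Fintype.card_fin, smul_eq_mul]
    obtain ⟨m, rfl⟩ : ∃ m, d = m + 1 := ⟨d - 1, by omega⟩
    simp only [Nat.add_sub_cancel]
    field_simp
    ring
  have := (integrable_indicator_iff measurableSet_ball).2 h0
  rw [← integrable_indicator_iff measurableSet_ball]
  have e : (Metric.ball y R).indicator (fun x => ‖x - y‖ * (‖x - y‖ ^ d)⁻¹) =
      fun x => (Metric.ball 0 R).indicator
        (fun x : EuclideanSpace ℝ (Fin d) => ‖x‖ * (‖x‖ ^ d)⁻¹) (x - y) := by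
    ext x
    simp [indicator, dist_eq_norm]
  rw [e]
  exact this.comp_sub_right y


lemma pv_mul {d n : ℕ} (hd : 0 < d) {D : Set (EuclideanSpace ℝ (Fin d))} (hDo : IsOpen D)
    (hDb : Bornology.IsBounded D) {Ω K : EuclideanSpace ℝ (Fin d) → ℝ}
    (hΩ : IsCZDensity d ((n : ℕ∞) + 1) Ω) (hK : K = fun x => Ω x / ‖x‖ ^ d)
    {h P g : EuclideanSpace ℝ (Fin d) → ℝ} {L : NNReal} (hh : LipschitzWith L h)
    (hP : Continuous P) (hg : IsRestrictedCZ D K P g) :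
    IsRestrictedCZ D K (fun x => h x * P x)
      (D.indicator fun y => h y * g y + ∫ x in D, (h x - h y) * P x * K (y - x)) := by
  refine ⟨fun y hy => indicator_of_notMem hy _, ?_⟩
  obtain ⟨C, hC, hKb⟩ := kernel_bound hΩ hK
  have hKm := kernel_measurable hΩ hK
  have hDm : MeasurableSet D := hDo.measurableSet
  obtain ⟨M, hM⟩ := hDb.isCompact_closure.exists_bound_of_continuousOn hP.continuousOn
  have hM' : ∀ x ∈ D, |P x| ≤ |M| := fun x hx => (hM x (subset_closure hx)).trans (le_abs_self M)
  filter_upwards [hg.2, ae_restrict_mem hDm] with y hy hyD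
  rw [indicator_of_mem hyD]
  obtain ⟨R, hR⟩ := hDb.subset_ball y
  have hvol : volume D < ⊤ := hDb.measure_lt_top
  have hKy : Measurable fun x => K (y - x) := hKm.comp (measurable_const.sub measurable_id)
  set G : EuclideanSpace ℝ (Fin d) → ℝ := fun x => (h x - h y) * P x * K (y - x) with hG
  have hGm : Measurable G :=
    (((hh.continuous.measurable.sub_const _).mul hP.measurable).mul hKy)
  have hGb : ∀ x ∈ D, |G x| ≤ (L * |M| * C) * (‖x - y‖ * (‖x - y‖ ^ d)⁻¹) := by
    intro x hx
    by_cases hxy : x = y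
    · subst hxy; simp [hG]
    · have h1 : |h x - h y| ≤ L * ‖x - y‖ := by
        have := hh.dist_le_mul x y
        rwa [Real.dist_eq, dist_eq_norm] at this
      have h2 := hKb (y - x) (sub_ne_zero.2 (Ne.symm hxy))
      rw [norm_sub_rev] at h2
      simp only [hG, abs_mul]
      calc |h x - h y| * |P x| * |K (y - x)| ≤ (L * ‖x - y‖) * |M| * (C * (‖x - y‖ ^ d)⁻¹) := by
            have := hM' x hx
            gcongr
        _ = _ := by ring
  have hGi : IntegrableOn G D := by
    have h1 := ((weak_sing_integrable hd y R).mono_set hR).const_mul (L * |M| * C)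
    refine h1.mono' hGm.aestronglyMeasurable ?_
    filter_upwards [ae_restrict_mem hDm] with x hx using hGb x hx
  have hset : ∀ ε : ℝ, {x ∈ D | ε < dist y x} = D ∩ {x | ε < dist y x} := fun ε => rfl
  have hms : ∀ ε : ℝ, MeasurableSet {x : EuclideanSpace ℝ (Fin d) | ε < dist y x} := fun ε =>
    measurableSet_lt measurable_const (by fun_prop)
  have hPi : ∀ ε > 0, IntegrableOn (fun x => P x * K (y - x)) {x ∈ D | ε < dist y x} := by
    intro ε hε
    have hm : MeasurableSet {x ∈ D | ε < dist y x} := hDm.inter (hms ε)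
    refine Measure.integrableOn_of_bounded (M := |M| * (C * (ε ^ d)⁻¹)) ?_
      (hP.measurable.mul hKy).aestronglyMeasurable ?_
    · exact ((measure_mono fun x hx => hx.1).trans_lt hvol).ne
    · filter_upwards [ae_restrict_mem hm] with x hx
      have hx2 : ε < ‖y - x‖ := by rw [← dist_eq_norm]; exact hx.2
      have hne : y - x ≠ 0 := norm_pos_iff.1 (hε.trans hx2)
      rw [Real.norm_eq_abs, abs_mul]
      have h1 := hM' x hx.1
      have h2 := hKb _ hne
      have h3 : (‖y - x‖ ^ d)⁻¹ ≤ (ε ^ d)⁻¹ := by gcongr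
      have h4 : |K (y - x)| ≤ C * (ε ^ d)⁻¹ := h2.trans (by gcongr)
      gcongr
  have key : ∀ ε > 0, ∫ x in {x ∈ D | ε < dist y x}, h x * P x * K (y - x) =
      h y * (∫ x in {x ∈ D | ε < dist y x}, P x * K (y - x)) +
        ∫ x in D, {x | ε < dist y x}.indicator G x := by
    intro ε hε
    rw [← integral_const_mul, setIntegral_indicator (hms ε), ← hset,
      ← integral_add ((hPi ε hε).const_mul _) (hGi.mono_set fun x hx => hx.1)]
    congr 1
    ext x
    simp only [hG]; ring
  have hT : Tendsto (fun ε : ℝ => ∫ x in D, {x | ε < dist y x}.indicator G x) (𝓝[>] (0 : ℝ))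
      (𝓝 (∫ x in D, G x)) := by
    refine tendsto_integral_filter_of_dominated_convergence (fun x => |G x|) ?_ ?_ hGi.abs ?_
    · exact Eventually.of_forall fun ε => (hGm.indicator (hms ε)).aestronglyMeasurable
    · refine Eventually.of_forall fun ε => ae_of_all _ fun x => ?_
      exact norm_indicator_le_norm_self G x
    · refine ae_of_all _ fun x => ?_
      by_cases hxy : x = y
      · subst hxy
        have : G x = 0 := by simp [hG]
        simp [indicator, this]
      · have hpos : 0 < dist y x := dist_pos.2 (Ne.symm hxy)
        refine tendsto_const_nhds.congr' ?_
        have : Iio (dist y x) ∈ 𝓝[>] (0:ℝ) := mem_nhdsWithin_of_mem_nhds (Iio_mem_nhds hpos)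
        filter_upwards [this] with ε hε
        rw [indicator_of_mem]; exact hε
  refine ((hy.const_mul (h y)).add hT).congr' ?_
  filter_upwards [self_mem_nhdsWithin] with ε hε using (key ε hε).symm

lemma E_approx {d n : ℕ} (hd : 0 < d) {Ω K : EuclideanSpace ℝ (Fin d) → ℝ}
    (hΩ : IsCZDensity d ((n : ℕ∞) + 1) Ω) (hK : K = fun x => Ω x / ‖x‖ ^ d) :
    ∃ C : ℝ, 0 < C ∧ ∀ (D : Set (EuclideanSpace ℝ (Fin d))) (_ : IsOpen D)
      (_ : Bornology.IsBounded D) (x₀ : EuclideanSpace ℝ (Fin d)) (l : ℝ), 0 < l →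
      ∀ (m : ℕ) (b r : ℕ → ℝ), (∀ k < m, 0 ≤ b k) → (∀ k < m, d * l ≤ r k) →
      ∀ u : EuclideanSpace ℝ (Fin d) → ℝ, Continuous u →
      (∀ x, |u x| ≤ ∑ k ∈ Finset.range m, b k *
        {x | r k ≤ ‖x - x₀‖}.indicator (fun x => ‖x - x₀‖ ^ n) x) →
      ∃ S ∈ PolyLE d n, ∀ y ∈ cube x₀ l, |(∫ x in D, u x * K (y - x)) - S y| ≤
        C * l ^ (n + 1) * ∑ k ∈ Finset.range m, b k * (r k)⁻¹ := by
  have hdR : (0 : ℝ) < d := by exact_mod_cast hd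
  have : Nonempty (Fin d) := ⟨⟨0, hd⟩⟩
  have : Nontrivial (EuclideanSpace ℝ (Fin d)) := by infer_instance
  obtain ⟨C₁, hC₁, hKd⟩ := kernel_deriv_bound (m := n + 1) le_rfl hΩ hK
  obtain ⟨C₂, hC₂, htail⟩ := tail_integral d
  obtain ⟨C₀, hC₀, hKb⟩ := kernel_bound hΩ hK
  have hKm := kernel_measurable hΩ hK
  set A : ℝ := C₁ * 2 ^ (d + (n + 1)) * (d / 2) ^ (n + 1) with hA
  have hApos : 0 < A := by positivity
  refine ⟨A * C₂, by positivity, ?_⟩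
  intro D hDo hDb x₀ l hl m b r hb hr u hu hub
  have hDm : MeasurableSet D := hDo.measurableSet
  have hvol : volume D < ⊤ := hDb.measure_lt_top
  have hdl : 0 < d * l := by positivity
  -- u vanishes near x₀
  have hfar : ∀ x, u x ≠ 0 → d * l ≤ ‖x - x₀‖ := by
    intro x hx
    by_contra hcon
    apply hx
    have h0 := hub x
    rw [Finset.sum_eq_zero] at h0
    · exact abs_nonpos_iff.1 h0
    · intro k hk
      rw [indicator_of_notMem, mul_zero]
      intro hk2
      have := hr k (Finset.mem_range.1 hk)
      exact hcon (this.trans hk2)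
  -- u is bounded on D
  obtain ⟨U, hU⟩ := hDb.isCompact_closure.exists_bound_of_continuousOn hu.continuousOn
  have hU' : ∀ x ∈ D, |u x| ≤ |U| := fun x hx => (hU x (subset_closure hx)).trans (le_abs_self U)
  -- segment
  have hseg : ∀ x, u x ≠ 0 → ∀ y ∈ cube x₀ l, ∀ t ∈ Icc (0:ℝ) 1,
      ‖x - x₀‖ / 2 ≤ ‖(x₀ - x) + t • (y - x₀)‖ := by
    intro x hx y hy t ht
    have h1 := hfar x hx
    have h2 := cube_norm_le hy
    have h3 : ‖x₀ - x‖ ≤ ‖(x₀ - x) + t • (y - x₀)‖ + ‖t • (y - x₀)‖ := by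
      have := norm_sub_le ((x₀ - x) + t • (y - x₀)) (t • (y - x₀))
      simpa using this
    have h4 : ‖t • (y - x₀)‖ ≤ ‖y - x₀‖ := by
      rw [norm_smul, Real.norm_eq_abs, abs_of_nonneg ht.1]
      exact mul_le_of_le_one_left (norm_nonneg _) ht.2
    rw [norm_sub_rev x₀ x] at h3
    nlinarith
  -- coefficient multilinear maps
  have hcoefi : ∀ k ≤ n, IntegrableOn (fun x => u x • iteratedFDeriv ℝ k K (x₀ - x)) D := by
    intro k hk
    obtain ⟨Ck, hCk, hKk⟩ := kernel_deriv_bound (m := k) (n := n) (by omega) hΩ hK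
    have hme : AEStronglyMeasurable (fun x => iteratedFDeriv ℝ k K (x₀ - x)) volume := by
      rw [← restrict_compl_singleton (μ := (volume : Measure (EuclideanSpace ℝ (Fin d)))) x₀]
      refine ContinuousOn.aestronglyMeasurable ?_ (measurableSet_singleton x₀).compl
      intro x hx
      have hne : x₀ - x ≠ 0 := sub_ne_zero.2 (Ne.symm hx)
      have hca := kernel_deriv_continuousAt (m := k) (n := n) (by omega) hΩ hK hne
      exact (ContinuousAt.comp (f := fun x => x₀ - x) hca (by fun_prop)).continuousWithinAt
    refine Measure.integrableOn_of_bounded (M := |U| * (Ck * ((d * l) ^ (d + k))⁻¹)) hvol.ne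
      (hu.aestronglyMeasurable.smul hme) ?_
    filter_upwards [ae_restrict_mem hDm] with x hx
    by_cases hux : u x = 0
    · rw [hux, zero_smul, norm_zero]; positivity
    · have h1 := hfar x hux
      have hne : x₀ - x ≠ 0 := by
        rw [← norm_pos_iff, norm_sub_rev]; exact hdl.trans_le h1
      rw [norm_smul, Real.norm_eq_abs]
      have h2 := hKk _ hne
      rw [norm_sub_rev x₀ x] at h2
      have h3 : (‖x - x₀‖ ^ (d + k))⁻¹ ≤ ((d * l) ^ (d + k))⁻¹ := by gcongr
      have h4 := hU' x hx
      exact mul_le_mul h4 (h2.trans (by gcongr)) (norm_nonneg _) (abs_nonneg _)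
  let Mk : (k : ℕ) → ContinuousMultilinearMap ℝ (fun _ : Fin k => EuclideanSpace ℝ (Fin d)) ℝ :=
    fun k => ∫ x in D, u x • iteratedFDeriv ℝ k K (x₀ - x)
  refine ⟨_, polyLE_taylor (n := n) Mk x₀ 1, fun y hy => ?_⟩
  set Tay : EuclideanSpace ℝ (Fin d) → ℝ := fun x => ∑ k ∈ Finset.range (n + 1),
    (k.factorial : ℝ)⁻¹ • iteratedFDeriv ℝ k K (x₀ - x) (fun _ => y - x₀) with hTay
  have hterm : ∀ k ∈ Finset.range (n + 1), Integrable (fun x => (k.factorial : ℝ)⁻¹ •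
      (u x • iteratedFDeriv ℝ k K (x₀ - x)) (fun _ => y - x₀)) (volume.restrict D) := by
    intro k hk
    have hk' : k ≤ n := by have := Finset.mem_range.1 hk; omega
    have hh := (ContinuousMultilinearMap.apply ℝ (fun _ : Fin k => EuclideanSpace ℝ (Fin d)) ℝ
      (fun _ => y - x₀)).integrable_comp (hcoefi k hk')
    exact hh.smul (k.factorial : ℝ)⁻¹
  have hTayi : IntegrableOn (fun x => u x * Tay x) D := by
    have := integrable_finsetSum _ hterm
    refine this.congr (ae_of_all _ fun x => ?_)
    simp only [hTay, Finset.mul_sum, smul_apply, smul_eq_mul]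
    refine Finset.sum_congr rfl fun k _ => by ring
  have hS : (∑ k ∈ Finset.range (n + 1), (k.factorial : ℝ)⁻¹ • Mk k (fun _ => (1:ℝ) • (y - x₀)))
      = ∫ x in D, u x * Tay x := by
    have e1 : ∀ x, u x * Tay x = ∑ k ∈ Finset.range (n + 1), (k.factorial : ℝ)⁻¹ •
      (u x • iteratedFDeriv ℝ k K (x₀ - x)) (fun _ => y - x₀) := by
      intro x
      simp only [hTay, Finset.mul_sum, smul_apply, smul_eq_mul]
      refine Finset.sum_congr rfl fun k _ => by ring
    simp only [e1, one_smul]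
    rw [integral_finsetSum _ hterm]
    refine Finset.sum_congr rfl fun k hk => ?_
    have hk' : k ≤ n := by have := Finset.mem_range.1 hk; omega
    rw [integral_smul]
    congr 1
    exact ContinuousMultilinearMap.integral_apply (hcoefi k hk') _
  have hKy : Measurable fun x => K (y - x) := hKm.comp (measurable_const.sub measurable_id)
  have hKi : IntegrableOn (fun x => u x * K (y - x)) D := by
    refine Measure.integrableOn_of_bounded (M := |U| * (C₀ * ((d * l / 2) ^ d)⁻¹)) hvol.ne
      (hu.measurable.mul hKy).aestronglyMeasurable ?_
    filter_upwards [ae_restrict_mem hDm] with x hx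
    by_cases hux : u x = 0
    · rw [hux, zero_mul, norm_zero]; positivity
    · have h1 := hfar x hux
      have h2 := hseg x hux y hy 1 (by simp)
      rw [one_smul, show x₀ - x + (y - x₀) = y - x by abel] at h2
      have h3 : d * l / 2 ≤ ‖y - x‖ := by linarith
      have hne : y - x ≠ 0 := by
        rw [← norm_pos_iff]; exact lt_of_lt_of_le (by positivity) h3
      rw [norm_mul, Real.norm_eq_abs, Real.norm_eq_abs]
      have h5 := hKb _ hne
      have h6 : (‖y - x‖ ^ d)⁻¹ ≤ ((d * l / 2) ^ d)⁻¹ := by gcongr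
      have h4 := hU' x hx
      exact mul_le_mul h4 (h5.trans (by gcongr)) (abs_nonneg _) (abs_nonneg _)
  rw [hS, ← integral_sub hKi hTayi]
  -- pointwise bound
  set maj : EuclideanSpace ℝ (Fin d) → ℝ := fun x => (A * l ^ (n + 1)) * ∑ k ∈ Finset.range m, b k *
    {x | r k ≤ ‖x - x₀‖}.indicator (fun x => (‖x - x₀‖ ^ (d + 1))⁻¹) x with hmaj
  have hmaj0 : ∀ x, 0 ≤ maj x := by
    intro x
    refine mul_nonneg (by positivity) (Finset.sum_nonneg fun k hk => mul_nonneg (hb k (Finset.mem_range.1 hk)) ?_)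
    exact indicator_nonneg (fun _ _ => by positivity) x
  have hrpos : ∀ k ∈ Finset.range m, 0 < r k := fun k hk =>
    hdl.trans_le (hr k (Finset.mem_range.1 hk))
  have hmajterm : ∀ k ∈ Finset.range m, Integrable (fun x => b k *
      {x | r k ≤ ‖x - x₀‖}.indicator (fun x => (‖x - x₀‖ ^ (d + 1))⁻¹) x) := fun k hk =>
    (htail x₀ (r k) (hrpos k hk)).1.const_mul _
  have hmaji : Integrable maj := (integrable_finsetSum _ hmajterm).const_mul _
  have hpt : ∀ x, |u x * K (y - x) - u x * Tay x| ≤ maj x := by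
    intro x
    by_cases hux : u x = 0
    · rw [hux]; simpa using hmaj0 x
    have h1 := hfar x hux
    have hpos : 0 < ‖x - x₀‖ := hdl.trans_le h1
    have hs := hseg x hux y hy
    have hT := taylor_bound (n := n) (F := K) (a := x₀ - x) (v := y - x₀)
      (B := C₁ * ((‖x - x₀‖ / 2) ^ (d + (n + 1)))⁻¹)
      (fun t ht => kernel_contDiffAt hΩ hK (by
        rw [← norm_pos_iff]; exact lt_of_lt_of_le (by positivity) (hs t ht)))
      (fun t ht => by
        have hne : (x₀ - x) + t • (y - x₀) ≠ 0 := by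
          rw [← norm_pos_iff]; exact lt_of_lt_of_le (by positivity) (hs t ht)
        refine (hKd _ hne).trans ?_
        have := hs t ht
        gcongr)
    rw [show x₀ - x + (y - x₀) = y - x by abel] at hT
    rw [← mul_sub, abs_mul]
    have hv : ‖y - x₀‖ ^ (n + 1) ≤ (d * (l / 2)) ^ (n + 1) :=
      pow_le_pow_left₀ (norm_nonneg _) (cube_norm_le hy) _
    have hT2 : |K (y - x) - Tay x| ≤ (A * l ^ (n + 1)) * (‖x - x₀‖ ^ (d + (n + 1)))⁻¹ := by
      refine (hT.trans (mul_le_mul_of_nonneg_left hv (by positivity))).trans (le_of_eq ?_)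
      rw [hA, div_pow, inv_div, div_eq_mul_inv, show (d:ℝ) * (l / 2) = (d / 2) * l by ring, mul_pow]
      ring
    refine (mul_le_mul (hub x) hT2 (abs_nonneg _) ((abs_nonneg _).trans (hub x))).trans (le_of_eq ?_)
    simp only [hmaj, Finset.sum_mul, Finset.mul_sum]
    refine Finset.sum_congr rfl fun k _ => ?_
    by_cases hk : x ∈ {x | r k ≤ ‖x - x₀‖}
    · rw [indicator_of_mem hk, indicator_of_mem hk]
      field_simp
      ring
    · rw [indicator_of_notMem hk, indicator_of_notMem hk]; ring
  calc |∫ x in D, (u x * K (y - x) - u x * Tay x)| ≤ ∫ x in D, maj x := by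
        rw [← Real.norm_eq_abs]
        exact norm_integral_le_of_norm_le hmaji.integrableOn (ae_of_all _ hpt)
    _ ≤ ∫ x, maj x := setIntegral_le_integral hmaji (ae_of_all _ hmaj0)
    _ = (A * l ^ (n + 1)) * ∑ k ∈ Finset.range m, b k *
          ∫ x, {x | r k ≤ ‖x - x₀‖}.indicator (fun x => (‖x - x₀‖ ^ (d + 1))⁻¹) x := by
        rw [hmaj, integral_const_mul, integral_finsetSum _ hmajterm]
        simp only [integral_const_mul]
    _ ≤ (A * l ^ (n + 1)) * ∑ k ∈ Finset.range m, b k * (C₂ * (r k)⁻¹) := by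
        refine mul_le_mul_of_nonneg_left (Finset.sum_le_sum fun k hk => ?_) (by positivity)
        exact mul_le_mul_of_nonneg_left (htail x₀ (r k) (hrpos k hk)).2 (hb k (Finset.mem_range.1 hk))
    _ = _ := by
        rw [Finset.mul_sum, Finset.mul_sum]
        exact Finset.sum_congr rfl fun k _ => by ring

lemma exists_cutoff {d : ℕ} (hd : 0 < d) : ∃ φ : EuclideanSpace ℝ (Fin d) → ℝ,
    (∀ n : ℕ, ContDiff ℝ (n + 1) φ) ∧ HasCompactSupport φ ∧ (∀ u, 0 ≤ φ u) ∧ (∀ u, φ u ≤ 1) ∧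
    (∀ u, ‖u‖ ≤ d → φ u = 1) := by
  have hdR : (0 : ℝ) < d := by exact_mod_cast hd
  let b : ContDiffBump (0 : EuclideanSpace ℝ (Fin d)) := ⟨d, 2 * d, hdR, by linarith⟩
  refine ⟨b, fun n => b.contDiff, b.hasCompactSupport, fun u => b.nonneg, fun u => b.le_one, fun u hu => ?_⟩
  exact b.one_of_mem_closedBall (by simpa using hu)

lemma eval_bound {d n : ℕ} : ∃ B : ℝ, 0 < B ∧ ∀ (p : MvPolynomial (Fin d) ℝ), p.IsHomogeneous n →
    ∀ M : ℝ, 0 ≤ M → (∀ α ∈ Finset.finsuppAntidiag Finset.univ n, |p.coeff α| ≤ M) →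
    ∀ u : EuclideanSpace ℝ (Fin d), |MvPolynomial.eval (fun i => u i) p| ≤ B * M * ‖u‖ ^ n := by
  refine ⟨(Finset.finsuppAntidiag (Finset.univ : Finset (Fin d)) n).card + 1, by positivity,
    fun p hp M hM0 hM u => ?_⟩
  have h : ∀ α ∈ Finset.finsuppAntidiag (Finset.univ : Finset (Fin d)) n,
      |p.coeff α * ∏ i, u i ^ α i| ≤ M * ‖u‖ ^ n := by
    intro α hα
    rw [abs_mul, Finset.abs_prod]
    have hs : ∑ i, α i = n := (Finset.mem_finsuppAntidiag.1 hα).1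
    have h1 : ∏ i, |u i ^ α i| ≤ ‖u‖ ^ n := by
      calc ∏ i, |u i ^ α i| ≤ ∏ i, ‖u‖ ^ α i := by
            refine Finset.prod_le_prod (fun _ _ => abs_nonneg _) fun i _ => ?_
            rw [abs_pow]
            exact pow_le_pow_left₀ (abs_nonneg _) (PiLp.norm_apply_le u i) _
        _ = _ := by rw [Finset.prod_pow_eq_pow_sum, hs]
    exact mul_le_mul (hM α hα) h1 (Finset.prod_nonneg fun _ _ => abs_nonneg _)
      ((abs_nonneg _).trans (hM α hα))
  rw [eval_homog hp]
  refine (Finset.abs_sum_le_sum_abs _ _).trans ((Finset.sum_le_sum h).trans ?_)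
  rw [Finset.sum_const, nsmul_eq_mul]
  have : 0 ≤ M * ‖u‖ ^ n := by positivity
  nlinarith

lemma psi_approx {d n : ℕ} {φ : EuclideanSpace ℝ (Fin d) → ℝ} (hφ : ContDiff ℝ (n + 1) φ)
    (hφc : HasCompactSupport φ) :
    ∃ B : ℝ, 0 < B ∧ ∀ (p : MvPolynomial (Fin d) ℝ), p.IsHomogeneous n →
    ∀ M : ℝ, 0 ≤ M → (∀ α ∈ Finset.finsuppAntidiag Finset.univ n, |p.coeff α| ≤ M) →
    (∀ u : EuclideanSpace ℝ (Fin d), |MvPolynomial.eval (fun i => u i) p * φ u| ≤ B * M) ∧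
    ∀ (x₀ xR : EuclideanSpace ℝ (Fin d)) (c : ℝ), ∃ T ∈ PolyLE d n, ∀ x : EuclideanSpace ℝ (Fin d),
      |MvPolynomial.eval (fun i => (c • (x - x₀)) i) p * φ (c • (x - x₀)) - T x| ≤
        B * M * ‖c • (x - xR)‖ ^ (n + 1) := by
  set I := Finset.finsuppAntidiag (Finset.univ : Finset (Fin d)) n with hI
  let F : (Fin d →₀ ℕ) → EuclideanSpace ℝ (Fin d) → ℝ := fun α u => (∏ i, u i ^ α i) * φ u
  have hF : ∀ α, ContDiff ℝ (n + 1) (F α) := by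
    intro α
    refine ContDiff.mul ?_ hφ
    refine contDiff_prod fun i _ => ContDiff.pow ?_ _
    fun_prop
  have hFc : ∀ α, HasCompactSupport (F α) := fun α => hφc.mul_left
  have h1 : ∀ α, ∃ B : ℝ, 0 ≤ B ∧ ∀ u, |F α u| ≤ B := by
    intro α
    obtain ⟨B, hB⟩ := (hFc α).exists_bound_of_continuous (hF α).continuous
    exact ⟨|B|, abs_nonneg _, fun u => (hB u).trans (le_abs_self B)⟩
  choose B1 hB10 hB1 using h1
  choose B2 hB20 hB2 using fun α => taylorApprox_smooth (hF α) (hFc α)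
  have hs1 : 0 ≤ ∑ α ∈ I, B1 α := Finset.sum_nonneg fun α _ => hB10 α
  have hs2 : 0 ≤ ∑ α ∈ I, B2 α := Finset.sum_nonneg fun α _ => hB20 α
  refine ⟨∑ α ∈ I, B1 α + ∑ α ∈ I, B2 α + 1, by positivity, fun p hp M hM0 hM => ?_⟩
  have he : ∀ u : EuclideanSpace ℝ (Fin d), MvPolynomial.eval (fun i => u i) p * φ u =
      ∑ α ∈ I, p.coeff α * F α u := by
    intro u
    rw [eval_homog hp, Finset.sum_mul]
    exact Finset.sum_congr rfl fun α _ => by simp only [F]; ring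
  constructor
  · intro u
    rw [he]
    calc _ ≤ ∑ α ∈ I, |p.coeff α * F α u| := Finset.abs_sum_le_sum_abs _ _
      _ ≤ ∑ α ∈ I, M * B1 α := by
        refine Finset.sum_le_sum fun α hα => ?_
        rw [abs_mul]
        exact mul_le_mul (hM α hα) (hB1 α u) (abs_nonneg _) hM0
      _ = (∑ α ∈ I, B1 α) * M := by rw [← Finset.mul_sum, mul_comm]
      _ ≤ _ := by gcongr; linarith
  · intro x₀ xR c
    choose T hT hTb using fun α => hB2 α x₀ xR c
    refine ⟨fun x => ∑ α ∈ I, p.coeff α * T α x, polyLE_sum _ fun α _ => polyLE_smul _ (hT α), fun x => ?_⟩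
    rw [he, ← Finset.sum_sub_distrib]
    calc _ ≤ ∑ α ∈ I, |p.coeff α * F α (c • (x - x₀)) - p.coeff α * T α x| :=
          Finset.abs_sum_le_sum_abs _ _
      _ ≤ ∑ α ∈ I, M * (B2 α * ‖c • (x - xR)‖ ^ (n + 1)) := by
        refine Finset.sum_le_sum fun α hα => ?_
        rw [← mul_sub, abs_mul]
        exact mul_le_mul (hM α hα) (hTb α x) (abs_nonneg _) hM0
      _ = (∑ α ∈ I, B2 α) * M * ‖c • (x - xR)‖ ^ (n + 1) := by
        rw [← Finset.mul_sum, ← Finset.sum_mul]; ring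
      _ ≤ _ := by gcongr; linarith

lemma seminorm_sum {d n : ℕ} {ω : ℝ → ℝ} (hω : IsModulusOfOrder ω n) (hpos : ∀ t, 0 < t → 0 < ω t) :
    ∃ C : ℝ, 0 < C ∧ ∀ (D : Set (EuclideanSpace ℝ (Fin d))) (x₀ : EuclideanSpace ℝ (Fin d))
      (ψ : EuclideanSpace ℝ (Fin d) → ℝ) (A : ℝ), 0 ≤ A → (∀ u, |ψ u| ≤ A) →
      (∀ (xR : EuclideanSpace ℝ (Fin d)) (c : ℝ), ∃ T ∈ PolyLE d n, ∀ x : EuclideanSpace ℝ (Fin d),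
        |ψ (c • (x - x₀)) - T x| ≤ A * ‖c • (x - xR)‖ ^ (n + 1)) →
      ∀ m : ℕ,
      zygSeminorm ω n D (fun x => ∑ k ∈ Finset.range m, ω ((2 ^ k)⁻¹) * ψ ((2 ^ k : ℝ) • (x - x₀)))
        ≤ ENNReal.ofReal (C * A) ∧
      l1Norm D (fun x => ∑ k ∈ Finset.range m, ω ((2 ^ k)⁻¹) * ψ ((2 ^ k : ℝ) • (x - x₀)))
        ≤ ENNReal.ofReal (C * A) * volume D := by
  obtain ⟨C, hC, hsum⟩ := modulus_sum hω
  have hω2 : 0 < ω 2 := hpos 2 (by norm_num)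
  refine ⟨(d + 1) ^ (n + 1) * C + C * ω 2, by positivity, ?_⟩
  intro D x₀ ψ A hA hψ hT m
  have hωk : ∀ k : ℕ, 0 ≤ ω ((2 ^ k)⁻¹) := fun k => hω.nonneg _ (by positivity)
  constructor
  · unfold zygSeminorm
    refine iSup_le fun xR => iSup_le fun s => iSup_le fun hs => iSup_le fun _ => ?_
    choose T hTp hTb using fun k : ℕ => hT xR (2 ^ k)
    let S : ℕ → EuclideanSpace ℝ (Fin d) → ℝ := fun k => if 2 ^ k * s ≤ 1 then T k else fun _ => 0
    have hS : ∀ k, S k ∈ PolyLE d n := by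
      intro k
      simp only [S]
      split_ifs
      · exact hTp k
      · exact polyLE_zero d n
    refine (iInf₂_le (fun x => ∑ k ∈ Finset.range m, ω ((2 ^ k)⁻¹) * S k x)
      (polyLE_sum _ fun k _ => polyLE_smul _ (hS k))).trans ?_
    have hpt : ∀ x ∈ cube xR s,
        |(∑ k ∈ Finset.range m, ω ((2 ^ k)⁻¹) * ψ ((2 ^ k : ℝ) • (x - x₀))) -
          ∑ k ∈ Finset.range m, ω ((2 ^ k)⁻¹) * S k x| ≤ (d + 1) ^ (n + 1) * C * A * ω s := by
      intro x hx
      rw [← Finset.sum_sub_distrib]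
      have hx' := cube_norm_le hx
      calc _ ≤ ∑ k ∈ Finset.range m, |ω ((2 ^ k)⁻¹) * ψ ((2 ^ k : ℝ) • (x - x₀)) -
              ω ((2 ^ k)⁻¹) * S k x| := Finset.abs_sum_le_sum_abs _ _
        _ ≤ ∑ k ∈ Finset.range m, ((d + 1) ^ (n + 1) * A) * (ω ((2 ^ k)⁻¹) *
              (if 2 ^ k * s ≤ 1 then (2 ^ k * s) ^ (n + 1) else 1)) := by
            refine Finset.sum_le_sum fun k _ => ?_
            rw [← mul_sub, abs_mul, abs_of_nonneg (hωk k)]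
            have : |ψ ((2 ^ k : ℝ) • (x - x₀)) - S k x| ≤ ((d + 1) ^ (n + 1) * A) *
              (if 2 ^ k * s ≤ 1 then (2 ^ k * s) ^ (n + 1) else 1) := by
              simp only [S]
              split_ifs with hk
              · refine (hTb k x).trans ?_
                have h1 : ‖(2 ^ k : ℝ) • (x - xR)‖ ≤ (d + 1) * (2 ^ k * s) := by
                  rw [norm_smul, norm_pow, Real.norm_ofNat]
                  have h2 : ‖x - xR‖ ≤ (d + 1) * s := by nlinarith
                  calc (2:ℝ) ^ k * ‖x - xR‖ ≤ 2 ^ k * ((d + 1) * s) := by gcongr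
                    _ = _ := by ring
                calc A * ‖(2 ^ k : ℝ) • (x - xR)‖ ^ (n + 1) ≤ A * ((d + 1) * (2 ^ k * s)) ^ (n + 1) := by
                      gcongr
                  _ = _ := by rw [mul_pow]; ring
              · have h3 := hψ ((2 ^ k : ℝ) • (x - x₀))
                have h4 : (1:ℝ) ≤ (d + 1) ^ (n + 1) := one_le_pow₀ (by linarith [Nat.cast_nonneg (α := ℝ) d])
                rw [sub_zero, mul_one]
                nlinarith
            calc _ ≤ ω ((2 ^ k)⁻¹) * (((d + 1) ^ (n + 1) * A) *
              (if 2 ^ k * s ≤ 1 then (2 ^ k * s) ^ (n + 1) else 1)) :=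
                  mul_le_mul_of_nonneg_left this (hωk k)
              _ = _ := by ring
        _ ≤ ((d + 1) ^ (n + 1) * A) * (C * ω s) := by
            rw [← Finset.mul_sum]
            exact mul_le_mul_of_nonneg_left (hsum s hs m) (by positivity)
        _ = _ := by ring
    have hωs := hpos s hs
    calc (ENNReal.ofReal (ω s * s ^ d))⁻¹ * ∫⁻ x in cube xR s, ENNReal.ofReal
          |(∑ k ∈ Finset.range m, ω ((2 ^ k)⁻¹) * ψ ((2 ^ k : ℝ) • (x - x₀))) -
            ∑ k ∈ Finset.range m, ω ((2 ^ k)⁻¹) * S k x|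
        ≤ (ENNReal.ofReal (ω s * s ^ d))⁻¹ * ∫⁻ x in cube xR s,
            ENNReal.ofReal ((d + 1) ^ (n + 1) * C * A * ω s) := by
          refine mul_le_mul' le_rfl (setLIntegral_mono measurable_const fun x hx => ?_)
          exact ENNReal.ofReal_le_ofReal (hpt x hx)
      _ = ENNReal.ofReal ((d + 1) ^ (n + 1) * C * A) := by
          rw [setLIntegral_const, cube_volume _ hs, ← ENNReal.ofReal_mul (by positivity),
            ← ENNReal.ofReal_inv_of_pos (by positivity), ← ENNReal.ofReal_mul (by positivity)]
          congr 1
          field_simp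
      _ ≤ _ := by
          refine ENNReal.ofReal_le_ofReal ?_
          gcongr
          have : 0 < C * ω 2 := by positivity
          linarith
  · unfold l1Norm
    have hpt : ∀ x, |∑ k ∈ Finset.range m, ω ((2 ^ k)⁻¹) * ψ ((2 ^ k : ℝ) • (x - x₀))| ≤
        ((d + 1) ^ (n + 1) * C + C * ω 2) * A := by
      intro x
      have h2 := hsum 2 (by norm_num) m
      have h3 : ∀ k : ℕ, (if (2:ℝ) ^ k * 2 ≤ 1 then ((2:ℝ) ^ k * 2) ^ (n + 1) else 1) = 1 := by
        intro k
        rw [if_neg]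
        have : (1:ℝ) ≤ 2 ^ k := one_le_pow₀ (by norm_num)
        linarith
      simp only [h3, mul_one] at h2
      calc _ ≤ ∑ k ∈ Finset.range m, |ω ((2 ^ k)⁻¹) * ψ ((2 ^ k : ℝ) • (x - x₀))| :=
            Finset.abs_sum_le_sum_abs _ _
        _ ≤ ∑ k ∈ Finset.range m, ω ((2 ^ k)⁻¹) * A := by
            refine Finset.sum_le_sum fun k _ => ?_
            rw [abs_mul, abs_of_nonneg (hωk k)]
            exact mul_le_mul_of_nonneg_left (hψ _) (hωk k)
        _ = (∑ k ∈ Finset.range m, ω ((2 ^ k)⁻¹)) * A := by rw [Finset.sum_mul]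
        _ ≤ _ := by
            have : (0:ℝ) ≤ (d + 1) ^ (n + 1) * C := by positivity
            gcongr
            linarith
    calc _ ≤ ∫⁻ x in D, ENNReal.ofReal (((d + 1) ^ (n + 1) * C + C * ω 2) * A) :=
          lintegral_mono fun x => ENNReal.ofReal_le_ofReal (hpt x)
      _ = _ := by rw [setLIntegral_const]

lemma zyg_pick {d n : ℕ} {ω : ℝ → ℝ} {D : Set (EuclideanSpace ℝ (Fin d))}
    {f : EuclideanSpace ℝ (Fin d) → ℝ} {X : ℝ} (hX : 0 < X)
    (h : zygSeminorm ω n D f ≤ ENNReal.ofReal X) {x₀ : EuclideanSpace ℝ (Fin d)} {l : ℝ}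
    (hl : 0 < l) (hc : cube x₀ l ⊆ D) (hωl : 0 < ω l) :
    ∃ S ∈ PolyLE d n, (ENNReal.ofReal (l ^ d))⁻¹ * ∫⁻ x in cube x₀ l, ENNReal.ofReal |f x - S x| ≤
      ENNReal.ofReal (2 * X * ω l) := by
  have h1 : (⨅ (P : EuclideanSpace ℝ (Fin d) → ℝ) (_ : P ∈ PolyLE d n),
      (ENNReal.ofReal (ω l * l ^ d))⁻¹ * ∫⁻ x in cube x₀ l, ENNReal.ofReal |f x - P x|) <
      ENNReal.ofReal (2 * X) := by
    refine lt_of_le_of_lt (le_trans ?_ h) ((ENNReal.ofReal_lt_ofReal_iff (by positivity)).2 (by linarith))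
    unfold zygSeminorm
    exact le_iSup_of_le x₀ (le_iSup_of_le l (le_iSup_of_le hl (le_iSup_of_le hc le_rfl)))
  simp only [iInf_lt_iff] at h1
  obtain ⟨S, hS, h2⟩ := h1
  refine ⟨S, hS, ?_⟩
  have e : (ENNReal.ofReal (l ^ d))⁻¹ = ENNReal.ofReal (ω l) * (ENNReal.ofReal (ω l * l ^ d))⁻¹ := by
    rw [← ENNReal.ofReal_inv_of_pos (by positivity), ← ENNReal.ofReal_inv_of_pos (by positivity),
      ← ENNReal.ofReal_mul hωl.le]
    congr 1
    field_simp
  rw [e, mul_assoc]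
  calc _ ≤ ENNReal.ofReal (ω l) * ENNReal.ofReal (2 * X) := mul_le_mul' le_rfl h2.le
    _ = _ := by rw [← ENNReal.ofReal_mul hωl.le]; congr 1; ring

lemma omega_div_integrable {ω : ℝ → ℝ} {n : ℕ} (hω : IsModulusOfOrder ω n) {c e : ℝ} (hc : 0 < c) :
    IntegrableOn (fun t => ω t / t ^ (n + 1)) (Ioc c e) := by
  have : ContinuousOn (fun t => ω t / t ^ (n + 1)) (Icc c e) := by
    refine ContinuousOn.div (hω.continuousOn.mono fun t ht => ?_) (by fun_prop) fun t ht => ?_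
    · exact hc.le.trans ht.1
    · exact pow_ne_zero _ (hc.trans_le ht.1).ne'
  exact (this.integrableOn_compact isCompact_Icc).mono_set Ioc_subset_Icc_self

lemma xi_dyadic {ω : ℝ → ℝ} {n : ℕ} (hω : IsModulusOfOrder ω n) (m : ℕ) :
    xi ω n ((2 ^ m)⁻¹) ≤ 2 ^ n * ∑ k ∈ Finset.range m, ω ((2 ^ k)⁻¹) * (2 ^ k) ^ n := by
  induction m with
  | zero => simp [xi]
  | succ m ih =>
    unfold xi at ih ⊢
    have h1 : ((2:ℝ) ^ (m + 1))⁻¹ ≤ (2 ^ m)⁻¹ := by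
      gcongr <;> norm_num
    have h2 : ((2:ℝ) ^ m)⁻¹ ≤ 1 := inv_le_one_of_one_le₀ (one_le_pow₀ (by norm_num))
    have hp : (0:ℝ) < (2 ^ (m + 1))⁻¹ := by positivity
    rw [← Ioc_union_Ioc_eq_Ioc h1 h2, setIntegral_union (Ioc_disjoint_Ioc_of_le le_rfl) measurableSet_Ioc
      (omega_div_integrable hω hp) (omega_div_integrable hω (by positivity)),
      Finset.sum_range_succ, mul_add, add_comm]
    refine add_le_add ih ?_
    have hb : ∀ t ∈ Ioc ((2:ℝ) ^ (m + 1))⁻¹ ((2 ^ m)⁻¹), ω t / t ^ (n + 1) ≤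
        ω ((2 ^ m)⁻¹) * (2 ^ (m + 1)) ^ (n + 1) := by
      intro t ht
      have ht0 : 0 < t := hp.trans ht.1
      have h3 : ω t ≤ ω ((2 ^ m)⁻¹) := hω.monotoneOn ht0.le (by simp) ht.2
      have h4 : (t ^ (n + 1))⁻¹ ≤ (2 ^ (m + 1)) ^ (n + 1) := by
        rw [← inv_pow]
        refine pow_le_pow_left₀ (by positivity) ?_ _
        rw [inv_le_comm₀ ht0 (by positivity)]
        exact ht.1.le
      rw [div_eq_mul_inv]
      exact mul_le_mul h3 h4 (by positivity) (hω.nonneg _ (by positivity))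
    calc _ ≤ ∫ t in Ioc ((2:ℝ) ^ (m + 1))⁻¹ ((2 ^ m)⁻¹), ω ((2 ^ m)⁻¹) * (2 ^ (m + 1)) ^ (n + 1) :=
          setIntegral_mono_on (omega_div_integrable hω hp) (integrableOn_const (by simp)) measurableSet_Ioc hb
      _ = ((2 ^ m)⁻¹ - (2 ^ (m + 1))⁻¹) * (ω ((2 ^ m)⁻¹) * (2 ^ (m + 1)) ^ (n + 1)) := by
          rw [setIntegral_const, smul_eq_mul, measureReal_def, Real.volume_Ioc,
            ENNReal.toReal_ofReal (by linarith)]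
      _ ≤ _ := by
          refine le_of_eq ?_
          have : ((2:ℝ) ^ m)⁻¹ - (2 ^ (m + 1))⁻¹ = (2 ^ (m + 1))⁻¹ := by
            rw [pow_succ]; field_simp; norm_num
          rw [this]
          have h5 : ((2:ℝ) ^ (m + 1)) ^ (n + 1) = 2 ^ (m + 1) * (2 ^ n * (2 ^ m) ^ n) := by
            rw [pow_succ _ n, mul_comm]
            congr 1
            rw [pow_succ, mul_pow]; ring
          rw [h5]
          field_simp

lemma xi_le {ω : ℝ → ℝ} {n : ℕ} (hω : IsModulusOfOrder ω n) (m : ℕ) {l : ℝ} (hl : (2 ^ m)⁻¹ ≤ l) :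
    xi ω n l ≤ 2 ^ n * ∑ k ∈ Finset.range m, ω ((2 ^ k)⁻¹) * (2 ^ k) ^ n := by
  refine le_trans ?_ (xi_dyadic hω m)
  unfold xi
  have hp : (0:ℝ) < (2 ^ m)⁻¹ := by positivity
  refine setIntegral_mono_set (omega_div_integrable hω hp) ?_ ?_
  · filter_upwards [ae_restrict_mem measurableSet_Ioc] with t ht
    have ht0 : 0 < t := hp.trans ht.1
    exact div_nonneg (hω.nonneg _ ht0.le) (by positivity)
  · exact (Ioc_subset_Ioc_left hl).eventuallyLE

lemma exists_scale {l : ℝ} (hl : 0 < l) (hl1 : l < 1) : ∃ m : ℕ, 0 < m ∧ ((2:ℝ) ^ m)⁻¹ ≤ l ∧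
    ∀ k < m, 2 ^ k * l ≤ 1 := by
  classical
  have hex : ∃ m : ℕ, ((2:ℝ) ^ m)⁻¹ ≤ l := by
    obtain ⟨m, hm⟩ := exists_pow_lt_of_lt_one hl (by norm_num : (2⁻¹:ℝ) < 1)
    exact ⟨m, by rw [← inv_pow]; exact hm.le⟩
  refine ⟨Nat.find hex, ?_, Nat.find_spec hex, fun k hk => ?_⟩
  · rw [Nat.find_pos]
    simpa using hl1
  · have := Nat.find_min hex hk
    push Not at this
    have h2 : (0:ℝ) < 2 ^ k := by positivity
    have h3 := mul_lt_mul_of_pos_left this h2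
    rw [mul_inv_cancel₀ h2.ne'] at h3
    exact h3.le

lemma eval_scale {d n : ℕ} {p : MvPolynomial (Fin d) ℝ} (hp : p.IsHomogeneous n) (c : ℝ)
    (w : Fin d → ℝ) : MvPolynomial.eval (fun i => c * w i) p = c ^ n * MvPolynomial.eval w p := by
  rw [eval_homog hp, eval_homog hp, Finset.mul_sum]
  refine Finset.sum_congr rfl fun α hα => ?_
  have hs : ∑ i, α i = n := (Finset.mem_finsuppAntidiag.1 hα).1
  simp only [mul_pow, Finset.prod_mul_distrib]
  rw [Finset.prod_pow_eq_pow_sum, hs]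
  ring

lemma main_small {d n : ℕ} (hd : 0 < d) {ω : ℝ → ℝ} (hω : IsModulusOfOrder ω n)
    (hpos : ∀ t, 0 < t → 0 < ω t)
    {D : Set (EuclideanSpace ℝ (Fin d))} (hDo : IsOpen D) (hDn : D.Nonempty)
    (hDb : Bornology.IsBounded D) {Ω K : EuclideanSpace ℝ (Fin d) → ℝ}
    (hΩ : IsCZDensity d ((n : ℕ∞) + 1) Ω) (hK : K = fun x => Ω x / ‖x‖ ^ d)
    {C' : ℝ} (hC' : 0 < C')
    (hbdd : ∀ f g : EuclideanSpace ℝ (Fin d) → ℝ,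
        LocallyIntegrableOn f D → zygSeminorm ω n D f < ⊤ → l1Norm D f < ⊤ →
        IsRestrictedCZ D K f g →
        LocallyIntegrableOn g D ∧
          zygSeminorm ω n D g + l1Norm D g ≤
            ENNReal.ofReal C' * (zygSeminorm ω n D f + l1Norm D f)) :
    ∃ C : ℝ, 0 < C ∧
      ∀ (x₀ : EuclideanSpace ℝ (Fin d)) (l : ℝ), 0 < l → l < 1 → cube x₀ l ⊆ D →
        ∀ (p : MvPolynomial (Fin d) ℝ) (M : ℝ), p.IsHomogeneous n → 0 < M →
          (∀ x ∈ D, |MvPolynomial.eval (fun i => x i - x₀ i) p| ≤ M) →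
          ∀ g : EuclideanSpace ℝ (Fin d) → ℝ,
            IsRestrictedCZ D K (fun x => MvPolynomial.eval (fun i => x i - x₀ i) p) g →
            ∃ S ∈ PolyLE d n,
              (ENNReal.ofReal (l ^ d))⁻¹ *
                  ∫⁻ x in cube x₀ l, ENNReal.ofReal |g x - S x| ≤
                ENNReal.ofReal (C * M * omegaTilde ω n l) := by
  have hdR : (0 : ℝ) < d := by exact_mod_cast hd
  obtain ⟨φ, hφs, hφc, hφ0, hφ1, hφd⟩ := exists_cutoff hd
  obtain ⟨Cc, hCc, hcoef⟩ := coeff_bound (n := n) hDo hDn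
  obtain ⟨Be, hBe, heval⟩ := eval_bound (d := d) (n := n)
  obtain ⟨Bp, hBp, hpsi⟩ := psi_approx (hφs n) hφc
  obtain ⟨Cs, hCs, hsemi⟩ := seminorm_sum (d := d) hω hpos
  obtain ⟨Ce, hCe, hE⟩ := E_approx hd hΩ hK
  obtain ⟨Cm, hCm, hmod⟩ := modulus_sum hω
  have hφlip : ∃ L, LipschitzWith L φ := by
    refine ContDiff.lipschitzWith_of_hasCompactSupport hφc (hφs 0) ?_
    simp
  obtain ⟨L, hL⟩ := hφlip
  have hvol : volume D ≠ ⊤ := hDb.measure_lt_top.ne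
  set V : ℝ := (volume D).toReal with hV
  have hV0 : 0 ≤ V := ENNReal.toReal_nonneg
  have hVe : volume D = ENNReal.ofReal V := (ENNReal.ofReal_toReal hvol).symm
  set W : ℝ := C' * (Cs * (Bp * Cc)) * (1 + V) with hW
  have hWpos : 0 < W := by positivity
  set V₂ : ℝ := Ce * (Be * Cc) * (d : ℝ)⁻¹ * Cm with hV₂
  have hV₂pos : 0 < V₂ := by positivity
  have hω1 : 0 < ω 1 := hpos 1 one_pos
  set c₀ : ℝ := min (ω 1) (2 ^ n)⁻¹ with hc₀
  have hc₀pos : 0 < c₀ := lt_min hω1 (by positivity)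
  refine ⟨(2 * W + V₂) * c₀⁻¹, by positivity, ?_⟩
  intro x₀ l hl hl1 hcube p M hp hM hPM g hg
  obtain ⟨m, hm0, hml, hmk⟩ := exists_scale hl hl1
  have hωl := hpos l hl
  set P : EuclideanSpace ℝ (Fin d) → ℝ := fun x => MvPolynomial.eval (fun i => x i - x₀ i) p with hP
  have hPc : Continuous P := by
    simp only [hP, eval_homog hp]
    fun_prop
  have hco := hcoef x₀ p M hp hPM
  have hCM : 0 ≤ Cc * M := by positivity
  set a : ℕ → ℝ := fun k => ω ((2 ^ k)⁻¹) * (2 ^ k) ^ n with ha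
  have ha0 : ∀ k, 0 ≤ a k := fun k => mul_nonneg (hω.nonneg _ (by positivity)) (by positivity)
  set H : ℝ := ∑ k ∈ Finset.range m, a k with hH
  have hH1 : ω 1 ≤ H := by
    have h1 := Finset.single_le_sum (f := a) (s := Finset.range m) (fun k _ => ha0 k) (Finset.mem_range.2 hm0)
    simpa [ha] using h1
  have hHpos : 0 < H := hω1.trans_le hH1
  have hHmax : c₀ * max 1 (xi ω n l) ≤ H := by
    have h1 := xi_le hω m hml
    rw [mul_max_of_nonneg _ _ hc₀pos.le]
    refine max_le ?_ ?_
    · rw [mul_one]; exact (min_le_left _ _).trans hH1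
    · rcases le_or_gt (xi ω n l) 0 with hx | hx
      · exact (mul_nonpos_of_nonneg_of_nonpos hc₀pos.le hx).trans hHpos.le
      · calc c₀ * xi ω n l ≤ (2 ^ n)⁻¹ * (2 ^ n * H) :=
              mul_le_mul (min_le_right _ _) h1 hx.le (by positivity)
          _ = H := by field_simp
  set h : EuclideanSpace ℝ (Fin d) → ℝ := fun x => ∑ k ∈ Finset.range m, a k * φ ((2 ^ k : ℝ) • (x - x₀)) with hh
  have hhL : LipschitzWith (Real.toNNReal (∑ k ∈ Finset.range m, a k * (L * 2 ^ k))) h := by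
    refine LipschitzWith.of_dist_le_mul fun x y => ?_
    have hnn : 0 ≤ ∑ k ∈ Finset.range m, a k * ((L : ℝ) * 2 ^ k) :=
      Finset.sum_nonneg fun k _ => mul_nonneg (ha0 k) (by positivity)
    rw [Real.coe_toNNReal _ hnn, Real.dist_eq, hh]
    simp only
    rw [← Finset.sum_sub_distrib, Finset.sum_mul]
    refine (Finset.abs_sum_le_sum_abs _ _).trans (Finset.sum_le_sum fun k _ => ?_)
    rw [← mul_sub, abs_mul, abs_of_nonneg (ha0 k), mul_assoc (a k)]
    refine mul_le_mul_of_nonneg_left ?_ (ha0 k)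
    have h1 := hL.dist_le_mul ((2 ^ k : ℝ) • (x - x₀)) ((2 ^ k : ℝ) • (y - x₀))
    rw [Real.dist_eq, dist_eq_norm, ← smul_sub, norm_smul, norm_pow, Real.norm_ofNat,
      sub_sub_sub_cancel_right, ← dist_eq_norm] at h1
    linarith
  have hfe : (fun x => h x * P x) = fun x => ∑ k ∈ Finset.range m, ω ((2 ^ k)⁻¹) *
      (fun u : EuclideanSpace ℝ (Fin d) => MvPolynomial.eval (fun i => u i) p * φ u) ((2 ^ k : ℝ) • (x - x₀)) := by
    funext x
    simp only [hh]
    rw [Finset.sum_mul]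
    refine Finset.sum_congr rfl fun k _ => ?_
    have := eval_scale hp (2 ^ k) (fun i => x i - x₀ i)
    have e : (fun i => ((2 ^ k : ℝ) • (x - x₀)) i) = fun i => 2 ^ k * (x i - x₀ i) := by
      funext i; simp
    rw [e, this]
    simp only [ha, hP]; ring
  obtain ⟨hps1, hps2⟩ := hpsi p hp (Cc * M) hCM hco
  obtain ⟨hz, hl1n⟩ := hsemi D x₀ _ (Bp * (Cc * M)) (by positivity) hps1 (hps2 x₀) m
  rw [← hfe] at hz hl1n
  have hpv := pv_mul hd hDo hDb hΩ hK hhL hPc hg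
  set gf : EuclideanSpace ℝ (Fin d) → ℝ :=
    D.indicator fun y => h y * g y + ∫ x in D, (h x - h y) * P x * K (y - x) with hgf
  have hfc : Continuous fun x => h x * P x := hhL.continuous.mul hPc
  have hgz := (hbdd _ gf (hfc.locallyIntegrable.locallyIntegrableOn D)
    (hz.trans_lt ENNReal.ofReal_lt_top)
    (hl1n.trans_lt (ENNReal.mul_lt_top ENNReal.ofReal_lt_top hDb.measure_lt_top)) hpv).2
  have hgz2 : zygSeminorm ω n D gf ≤ ENNReal.ofReal (W * M) := by
    refine (le_self_add.trans hgz).trans ?_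
    refine (mul_le_mul' le_rfl (add_le_add hz hl1n)).trans (le_of_eq ?_)
    rw [hVe, ← ENNReal.ofReal_mul (by positivity), ← ENNReal.ofReal_add (by positivity) (by positivity),
      ← ENNReal.ofReal_mul hC'.le]
    congr 1
    rw [hW]; ring
  obtain ⟨S₁, hS₁, hS₁b⟩ := zyg_pick (by positivity) hgz2 hl hcube hωl
  -- the correction term
  have hu : ∀ x, |(h x - H) * P x| ≤ ∑ k ∈ Finset.range m, (a k * (Be * (Cc * M))) *
        {x | d * ((2:ℝ) ^ k)⁻¹ ≤ ‖x - x₀‖}.indicator (fun x => ‖x - x₀‖ ^ n) x := by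
    intro x
    have hPx : |P x| ≤ Be * (Cc * M) * ‖x - x₀‖ ^ n := heval p hp (Cc * M) hCM hco (x - x₀)
    rw [hh, hH, ← Finset.sum_sub_distrib, Finset.sum_mul]
    refine (Finset.abs_sum_le_sum_abs _ _).trans (Finset.sum_le_sum fun k _ => ?_)
    have e : a k * φ ((2 ^ k : ℝ) • (x - x₀)) - a k = a k * (φ ((2 ^ k : ℝ) • (x - x₀)) - 1) := by ring
    rw [e, abs_mul, abs_mul, abs_of_nonneg (ha0 k), mul_assoc (a k), mul_assoc (a k)]
    refine mul_le_mul_of_nonneg_left ?_ (ha0 k)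
    by_cases hx : x ∈ {x | d * ((2:ℝ) ^ k)⁻¹ ≤ ‖x - x₀‖}
    · rw [indicator_of_mem hx]
      have h1 : |φ ((2 ^ k : ℝ) • (x - x₀)) - 1| ≤ 1 := by
        have := hφ0 ((2 ^ k : ℝ) • (x - x₀))
        have := hφ1 ((2 ^ k : ℝ) • (x - x₀))
        rw [abs_le]; constructor <;> linarith
      calc _ ≤ 1 * |P x| := mul_le_mul_of_nonneg_right h1 (abs_nonneg _)
        _ ≤ _ := by rw [one_mul]; exact hPx
    · rw [indicator_of_notMem hx, hφd, sub_self, abs_zero, zero_mul, mul_zero]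
      simp only [Set.mem_ofPred_eq, not_le] at hx
      rw [norm_smul, norm_pow, Real.norm_ofNat]
      have h2 : (0:ℝ) < 2 ^ k := by positivity
      have h3 := mul_lt_mul_of_pos_left hx h2
      have h4 : (2:ℝ) ^ k * (d * ((2:ℝ) ^ k)⁻¹) = d := by field_simp
      linarith
  obtain ⟨S₂, hS₂, hS₂b⟩ := hE D hDo hDb x₀ l hl m (fun k => a k * (Be * (Cc * M)))
    (fun k => d * ((2:ℝ) ^ k)⁻¹) (fun k _ => mul_nonneg (ha0 k) (by positivity))
    (fun k hk => by
      have h1 := hmk k hk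
      have h2 : (0:ℝ) < 2 ^ k := by positivity
      refine mul_le_mul_of_nonneg_left ?_ hdR.le
      rw [le_inv_comm₀ hl h2, ← one_div, le_div_iff₀ hl]
      exact h1)
    (fun x => (h x - H) * P x) ((hhL.continuous.sub continuous_const).mul hPc) hu
  have hS₂b' : ∀ y ∈ cube x₀ l, |(∫ x in D, (h x - H) * P x * K (y - x)) - S₂ y| ≤ V₂ * M * ω l := by
    intro y hy
    refine (hS₂b y hy).trans ?_
    have h1 := hmod l hl m
    have h2 : ∑ k ∈ Finset.range m, ω ((2 ^ k)⁻¹) * (if 2 ^ k * l ≤ 1 then (2 ^ k * l) ^ (n + 1) else 1) =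
        ∑ k ∈ Finset.range m, ω ((2 ^ k)⁻¹) * (2 ^ k * l) ^ (n + 1) :=
      Finset.sum_congr rfl fun k hk => by rw [if_pos (hmk k (Finset.mem_range.1 hk))]
    rw [h2] at h1
    have h3 : Ce * l ^ (n + 1) * ∑ k ∈ Finset.range m, a k * (Be * (Cc * M)) * (d * ((2:ℝ) ^ k)⁻¹)⁻¹ =
        (Ce * (Be * Cc) * (d : ℝ)⁻¹ * M) * ∑ k ∈ Finset.range m, ω ((2 ^ k)⁻¹) * (2 ^ k * l) ^ (n + 1) := by
      rw [Finset.mul_sum, Finset.mul_sum]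
      refine Finset.sum_congr rfl fun k _ => ?_
      simp only [ha]
      rw [mul_inv, inv_inv, mul_pow, pow_succ ((2:ℝ) ^ k)]
      ring
    rw [h3]
    calc _ ≤ (Ce * (Be * Cc) * (d : ℝ)⁻¹ * M) * (Cm * ω l) :=
          mul_le_mul_of_nonneg_left h1 (by positivity)
      _ = _ := by rw [hV₂]; ring
  have hhQ : ∀ y ∈ cube x₀ l, h y = H := by
    intro y hy
    simp only [hh, hH]
    refine Finset.sum_congr rfl fun k hk => ?_
    rw [hφd, mul_one]
    have h1 := hmk k (Finset.mem_range.1 hk)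
    have h2 := cube_norm_le hy
    rw [norm_smul, norm_pow, Real.norm_ofNat]
    calc (2:ℝ) ^ k * ‖y - x₀‖ ≤ 2 ^ k * (d * (l / 2)) := by gcongr
      _ = d * (2 ^ k * l) / 2 := by ring
      _ ≤ d := by nlinarith
  have hgfQ : ∀ y ∈ cube x₀ l, gf y = H * g y + ∫ x in D, (h x - H) * P x * K (y - x) := by
    intro y hy
    rw [hgf, indicator_of_mem (hcube hy), hhQ y hy]
  refine ⟨fun x => H⁻¹ * (S₁ x + (-1) * S₂ x), polyLE_smul _ (polyLE_add hS₁ (polyLE_smul _ hS₂)), ?_⟩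
  have hpt : ∀ y ∈ cube x₀ l, ENNReal.ofReal |g y - H⁻¹ * (S₁ y + (-1) * S₂ y)| ≤
      ENNReal.ofReal H⁻¹ * (ENNReal.ofReal |gf y - S₁ y| + ENNReal.ofReal (V₂ * M * ω l)) := by
    intro y hy
    rw [← ENNReal.ofReal_add (abs_nonneg _) (by positivity), ← ENNReal.ofReal_mul (by positivity)]
    refine ENNReal.ofReal_le_ofReal ?_
    have h1 := hS₂b' y hy
    have h2 := hgfQ y hy
    set E := ∫ x in D, (h x - H) * P x * K (y - x) with hEd
    have h3 : g y - H⁻¹ * (S₁ y + (-1) * S₂ y) = H⁻¹ * ((gf y - S₁ y) - (E - S₂ y)) := by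
      rw [h2]; field_simp; ring
    rw [h3, abs_mul, abs_of_pos (inv_pos.2 hHpos)]
    refine mul_le_mul_of_nonneg_left ?_ (by positivity)
    exact (abs_sub _ _).trans (by linarith)
  have hlp : ENNReal.ofReal (l ^ d) ≠ 0 := by
    rw [Ne, ENNReal.ofReal_eq_zero, not_le]; positivity
  calc _ ≤ (ENNReal.ofReal (l ^ d))⁻¹ * ∫⁻ y in cube x₀ l,
        ENNReal.ofReal H⁻¹ * (ENNReal.ofReal |gf y - S₁ y| + ENNReal.ofReal (V₂ * M * ω l)) := by
        refine mul_le_mul' le_rfl (setLIntegral_mono' (cube_isClosed x₀ l).measurableSet hpt)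
    _ = ENNReal.ofReal H⁻¹ * ((ENNReal.ofReal (l ^ d))⁻¹ * (∫⁻ y in cube x₀ l, ENNReal.ofReal |gf y - S₁ y|)
          + ENNReal.ofReal (V₂ * M * ω l)) := by
        rw [lintegral_const_mul' _ _ ENNReal.ofReal_ne_top, lintegral_add_right _ measurable_const,
          setLIntegral_const, cube_volume _ hl]
        set A := ∫⁻ y in cube x₀ l, ENNReal.ofReal |gf y - S₁ y|
        rw [← mul_assoc, mul_comm _ (ENNReal.ofReal H⁻¹), mul_assoc, mul_add,
          mul_comm (ENNReal.ofReal (V₂ * M * ω l)), ← mul_assoc _ (ENNReal.ofReal (l ^ d)),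
          ENNReal.inv_mul_cancel hlp ENNReal.ofReal_ne_top, one_mul]
    _ ≤ ENNReal.ofReal H⁻¹ * (ENNReal.ofReal (2 * (W * M) * ω l) + ENNReal.ofReal (V₂ * M * ω l)) := by
        exact mul_le_mul' le_rfl (add_le_add hS₁b le_rfl)
    _ ≤ _ := by
        rw [← ENNReal.ofReal_add (by positivity) (by positivity), ← ENNReal.ofReal_mul (by positivity)]
        refine ENNReal.ofReal_le_ofReal ?_
        unfold omegaTilde
        have hmx : 0 < max 1 (xi ω n l) := lt_max_of_lt_left one_pos
        have h1 : H⁻¹ ≤ c₀⁻¹ * (max 1 (xi ω n l))⁻¹ := by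
          rw [← mul_inv]
          exact inv_anti₀ (by positivity) hHmax
        calc _ = H⁻¹ * ((2 * W + V₂) * M * ω l) := by ring
          _ ≤ (c₀⁻¹ * (max 1 (xi ω n l))⁻¹) * ((2 * W + V₂) * M * ω l) := by gcongr
          _ = _ := by rw [div_eq_mul_inv]; ring

lemma polyLE_continuous {d n : ℕ} {P : EuclideanSpace ℝ (Fin d) → ℝ} (hP : P ∈ PolyLE d n) :
    Continuous P := by
  obtain ⟨p, _, hp⟩ := hP
  have : P = fun x => MvPolynomial.eval (fun i => x i) p := funext fun x => (hp x).symm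
  rw [this]
  exact (MvPolynomial.continuous_eval p).comp (by fun_prop)

lemma polyLE_shift {d n : ℕ} {p : MvPolynomial (Fin d) ℝ} (hp : p.IsHomogeneous n)
    (x₀ : EuclideanSpace ℝ (Fin d)) :
    (fun x : EuclideanSpace ℝ (Fin d) => MvPolynomial.eval (fun i => x i - x₀ i) p) ∈ PolyLE d n := by
  simp only [eval_homog hp]
  refine polyLE_sum _ fun α hα => polyLE_smul _ ?_
  have hs : ∑ i, α i = n := (Finset.mem_finsuppAntidiag.1 hα).1
  refine ⟨∏ i, (MvPolynomial.X i - MvPolynomial.C (x₀ i)) ^ α i, ?_, fun x => by simp⟩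
  refine (MvPolynomial.totalDegree_finset_prod _ _).trans ?_
  rw [← hs]
  refine Finset.sum_le_sum fun i _ => ?_
  refine (MvPolynomial.totalDegree_pow _ _).trans ?_
  have h1 : (MvPolynomial.X i - MvPolynomial.C (x₀ i) : MvPolynomial (Fin d) ℝ).totalDegree ≤ 1 := by
    refine (MvPolynomial.totalDegree_sub_C_le _ _).trans ?_
    rw [MvPolynomial.totalDegree_X]
  calc _ ≤ α i * 1 := Nat.mul_le_mul_left _ h1
    _ = _ := mul_one _

lemma zyg_poly {d n : ℕ} (ω : ℝ → ℝ) (D : Set (EuclideanSpace ℝ (Fin d)))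
    {P : EuclideanSpace ℝ (Fin d) → ℝ} (hP : P ∈ PolyLE d n) : zygSeminorm ω n D P = 0 := by
  unfold zygSeminorm
  refine le_antisymm ?_ bot_le
  refine iSup_le fun xR => iSup_le fun s => iSup_le fun hs => iSup_le fun _ => ?_
  refine (iInf₂_le P hP).trans ?_
  simp

lemma l1_le {d : ℕ} {D : Set (EuclideanSpace ℝ (Fin d))} (hDm : MeasurableSet D)
    {P : EuclideanSpace ℝ (Fin d) → ℝ} {M : ℝ} (hM : ∀ x ∈ D, |P x| ≤ M) :
    l1Norm D P ≤ ENNReal.ofReal M * volume D := by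
  unfold l1Norm
  calc _ ≤ ∫⁻ x in D, ENNReal.ofReal M :=
        setLIntegral_mono' hDm fun x hx => ENNReal.ofReal_le_ofReal (hM x hx)
    _ = _ := by rw [setLIntegral_const]

lemma omega_zero {ω : ℝ → ℝ} {n : ℕ} (hω : IsModulusOfOrder ω n) {t : ℝ} (ht : 0 < t)
    (h0 : ω t = 0) : ∀ s, 0 < s → ω s = 0 := by
  intro s hs
  refine le_antisymm ?_ (hω.nonneg s hs.le)
  rcases le_or_gt s t with hst | hst
  · rw [← h0]
    exact hω.monotoneOn hs.le ht.le hst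
  · obtain ⟨⟨q, _, _, C, _, h⟩, _⟩ := hω.conds
    have h1 := h (s / t) t ((one_lt_div ht).2 hst) ht
    rw [div_mul_cancel₀ _ ht.ne', h0, mul_zero] at h1
    exact h1

theorem main_thm {d n : ℕ} (ω : ℝ → ℝ) (hω : IsModulusOfOrder ω n)
    (D : Set (EuclideanSpace ℝ (Fin d))) (hD : IsLipschitzDomain D)
    (Ω K : EuclideanSpace ℝ (Fin d) → ℝ)
    (hΩ : IsCZDensity d ((n : ℕ∞) + 1) Ω)
    (hK : K = fun x => Ω x / ‖x‖ ^ d)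
    (hbdd : ∃ C' : ℝ, 0 < C' ∧
      ∀ f g : EuclideanSpace ℝ (Fin d) → ℝ,
        LocallyIntegrableOn f D → zygSeminorm ω n D f < ⊤ → l1Norm D f < ⊤ →
        IsRestrictedCZ D K f g →
        LocallyIntegrableOn g D ∧
          zygSeminorm ω n D g + l1Norm D g ≤
            ENNReal.ofReal C' * (zygSeminorm ω n D f + l1Norm D f)) :
    (∀ P ∈ PolyLE d n, ∀ g : EuclideanSpace ℝ (Fin d) → ℝ,
      IsRestrictedCZ D K P g →
        LocallyIntegrableOn g D ∧ zygSeminorm ω n D g < ⊤) ∧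
    (∃ C : ℝ, 0 < C ∧
      ∀ (x₀ : EuclideanSpace ℝ (Fin d)) (l : ℝ), 0 < l → cube x₀ l ⊆ D →
        ∀ P : EuclideanSpace ℝ (Fin d) → ℝ,
          (∃ p : MvPolynomial (Fin d) ℝ, p.IsHomogeneous n ∧
            ∀ x, P x = MvPolynomial.eval (fun i => x i - x₀ i) p) →
          ∀ g : EuclideanSpace ℝ (Fin d) → ℝ, IsRestrictedCZ D K P g →
            ∃ S ∈ PolyLE d n,
              (ENNReal.ofReal (l ^ d))⁻¹ *
                  ∫⁻ x in cube x₀ l, ENNReal.ofReal |g x - S x| ≤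
                ENNReal.ofReal (C * sSup ((fun x => |P x|) '' D) * omegaTilde ω n l)) := by
  obtain ⟨hDo, hDc, hDb, -⟩ := hD
  have hDn : D.Nonempty := hDc.nonempty
  have hDm : MeasurableSet D := hDo.measurableSet
  obtain ⟨C', hC', hbd⟩ := hbdd
  have hvol : volume D ≠ ⊤ := hDb.measure_lt_top.ne
  -- the sup norm on D of a polynomial
  have hsup : ∀ P ∈ PolyLE d n, ∀ x ∈ D, |P x| ≤ sSup ((fun x => |P x|) '' D) := by
    intro P hP x hx
    refine le_csSup ?_ (mem_image_of_mem _ hx)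
    obtain ⟨B, hB⟩ := hDb.isCompact_closure.exists_bound_of_continuousOn (polyLE_continuous hP).continuousOn
    refine ⟨B, ?_⟩
    rintro _ ⟨z, hz, rfl⟩
    exact hB z (subset_closure hz)
  have hbase : ∀ P ∈ PolyLE d n, ∀ g : EuclideanSpace ℝ (Fin d) → ℝ, IsRestrictedCZ D K P g →
      LocallyIntegrableOn g D ∧ zygSeminorm ω n D g ≤
        ENNReal.ofReal C' * (ENNReal.ofReal (sSup ((fun x => |P x|) '' D)) * volume D) := by
    intro P hP g hg
    have h1 := l1_le hDm (hsup P hP)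
    have h2 := hbd P g ((polyLE_continuous hP).locallyIntegrable.locallyIntegrableOn D)
      (by rw [zyg_poly ω D hP]; exact ENNReal.zero_lt_top)
      (h1.trans_lt (ENNReal.mul_lt_top ENNReal.ofReal_lt_top hDb.measure_lt_top)) hg
    refine ⟨h2.1, (le_self_add.trans h2.2).trans ?_⟩
    rw [zyg_poly ω D hP, zero_add]
    exact mul_le_mul' le_rfl h1
  have hi : ∀ P ∈ PolyLE d n, ∀ g : EuclideanSpace ℝ (Fin d) → ℝ, IsRestrictedCZ D K P g →
        LocallyIntegrableOn g D ∧ zygSeminorm ω n D g < ⊤ := by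
    intro P hP g hg
    obtain ⟨h1, h2⟩ := hbase P hP g hg
    exact ⟨h1, h2.trans_lt (ENNReal.mul_lt_top ENNReal.ofReal_lt_top
      (ENNReal.mul_lt_top ENNReal.ofReal_lt_top hDb.measure_lt_top))⟩
  refine ⟨hi, ?_⟩
  by_cases hdeg : ∃ t, 0 < t ∧ ω t = 0
  · -- the degenerate modulus
    obtain ⟨t, ht, ht0⟩ := hdeg
    refine ⟨1, one_pos, ?_⟩
    rintro x₀ l hl hc P ⟨p, hp, hPp⟩ g hg
    have hP : P ∈ PolyLE d n := by
      rw [show P = _ from funext hPp]; exact polyLE_shift hp x₀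
    have h1 := (hi P hP g hg).2
    have h2 : (⨅ (P : EuclideanSpace ℝ (Fin d) → ℝ) (_ : P ∈ PolyLE d n),
        (ENNReal.ofReal (ω l * l ^ d))⁻¹ * ∫⁻ x in cube x₀ l, ENNReal.ofReal |g x - P x|) < ⊤ := by
      refine lt_of_le_of_lt ?_ h1
      unfold zygSeminorm
      exact le_iSup_of_le x₀ (le_iSup_of_le l (le_iSup_of_le hl (le_iSup_of_le hc le_rfl)))
    simp only [iInf_lt_iff] at h2
    obtain ⟨S, hS, h3⟩ := h2
    refine ⟨S, hS, ?_⟩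
    rw [omega_zero hω ht ht0 l hl, zero_mul, ENNReal.ofReal_zero, ENNReal.inv_zero] at h3
    have h4 : ∫⁻ x in cube x₀ l, ENNReal.ofReal |g x - S x| = 0 := by
      by_contra hne
      rw [ENNReal.top_mul hne] at h3
      exact lt_irrefl _ h3
    rw [h4, mul_zero]
    exact bot_le
  have hpos : ∀ t, 0 < t → 0 < ω t := by
    intro t ht
    refine lt_of_le_of_ne (hω.nonneg t ht.le) fun h => hdeg ⟨t, ht, h.symm⟩
  rcases Nat.eq_zero_or_pos d with hd0 | hd
  · subst hd0
    refine ⟨1, one_pos, ?_⟩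
    intro x₀ l hl hc P _ g _
    refine ⟨fun _ => g x₀, ⟨MvPolynomial.C (g x₀), by simp, by simp⟩, ?_⟩
    have : ∀ x, g x - g x₀ = 0 := fun x => by rw [Subsingleton.elim x x₀, sub_self]
    simp [this]
  obtain ⟨C₁, hC₁, hsmall⟩ := main_small hd hω hpos hDo hDn hDb hΩ hK hC' hbd
  set V : ℝ := (volume D).toReal with hV
  have hV0 : 0 ≤ V := ENNReal.toReal_nonneg
  have hVe : volume D = ENNReal.ofReal V := (ENNReal.ofReal_toReal hvol).symm
  refine ⟨C₁ + 2 * (C' * (V + 1)), by positivity, ?_⟩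
  rintro x₀ l hl hc P ⟨p, hp, hPp⟩ g hg
  have hP : P ∈ PolyLE d n := by
    rw [show P = _ from funext hPp]; exact polyLE_shift hp x₀
  have hsP := hsup P hP
  set M := sSup ((fun x => |P x|) '' D) with hM
  have hM0 : 0 ≤ M := by
    obtain ⟨z, hz⟩ := hDn
    exact (abs_nonneg _).trans (hsP z hz)
  have hωl := hpos l hl
  have hot : 0 ≤ omegaTilde ω n l :=
    div_nonneg hωl.le (zero_le_one.trans (le_max_left _ _))
  rcases hM0.eq_or_lt with hMz | hMpos
  · -- P vanishes on D
    refine ⟨fun _ => 0, polyLE_zero d n, ?_⟩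
    have hg0 : ∀ᵐ y ∂(volume.restrict D), ENNReal.ofReal |g y - 0| = 0 := by
      filter_upwards [hg.2] with y hy
      have h1 : ∀ ε : ℝ, ∫ x in {x ∈ D | ε < dist y x}, P x * K (y - x) = 0 := by
        intro ε
        have hm : MeasurableSet {x ∈ D | ε < dist y x} :=
          hDm.inter (measurableSet_lt (f := fun _ => ε) (g := fun x => dist y x)
            measurable_const (by fun_prop))
        rw [setIntegral_congr_fun (g := fun _ => (0:ℝ)) hm, integral_zero]
        intro x hx
        have h2 := hsP x hx.1
        rw [← hMz] at h2
        simp only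
        rw [abs_nonpos_iff.1 h2, zero_mul]
      simp only [h1] at hy
      have h3 := tendsto_nhds_unique hy tendsto_const_nhds
      simp [h3]
    have hz : ∫⁻ x in cube x₀ l, ENNReal.ofReal |g x - 0| = 0 := by
      rw [lintegral_congr_ae (ae_restrict_of_ae_restrict_of_subset hc hg0), lintegral_zero]
    simp only [hz, mul_zero]
    exact bot_le
  rcases lt_or_ge l 1 with hl1 | hl1
  · obtain ⟨S, hS, hSb⟩ := hsmall x₀ l hl hl1 hc p M hp hMpos
      (fun x hx => by rw [← hPp]; exact hsP x hx) g (by rw [← show P = _ from funext hPp]; exact hg)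
    refine ⟨S, hS, hSb.trans (ENNReal.ofReal_le_ofReal ?_)⟩
    have : 0 ≤ 2 * (C' * (V + 1)) := by positivity
    gcongr
    linarith
  · have hz : zygSeminorm ω n D g ≤ ENNReal.ofReal (C' * (V + 1) * M) := by
      refine (hbase P hP g hg).2.trans ?_
      rw [hVe, ← ENNReal.ofReal_mul hM0, ← ENNReal.ofReal_mul hC'.le]
      refine ENNReal.ofReal_le_ofReal ?_
      have : 0 < C' * M := by positivity
      linarith
    obtain ⟨S, hS, hSb⟩ := zyg_pick (by positivity) hz hl hc hωl
    refine ⟨S, hS, hSb.trans (ENNReal.ofReal_le_ofReal ?_)⟩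
    have hxi : xi ω n l = 0 := by
      unfold xi
      rw [Ioc_eq_empty (not_lt.2 hl1)]
      simp
    have hote : omegaTilde ω n l = ω l := by
      unfold omegaTilde
      rw [hxi]; simp
    rw [hote]
    have : 0 ≤ C₁ * M * ω l := by positivity
    linarith

/-- **T(P) theorem for Zygmund spaces (necessity).** If the restricted operator `T_D` is
bounded on `𝒞_ω(D)`, then (i) `T_D P ∈ 𝒞_ω(D)` for every polynomial `P ∈ 𝒫_n(D)` and
(ii) the quantitative bound for homogeneous polynomials of degree `n` holds. -/
theorem statement_1 {d n : ℕ} (ω : ℝ → ℝ) (hω : IsModulusOfOrder ω n)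
    (D : Set (EuclideanSpace ℝ (Fin d))) (hD : IsLipschitzDomain D)
    (Ω K : EuclideanSpace ℝ (Fin d) → ℝ)
    (hΩ : IsCZDensity d ((n : ℕ∞) + 1) Ω)
    (hK : K = fun x => Ω x / ‖x‖ ^ d)
    (hbdd : ∃ C' : ℝ, 0 < C' ∧
      ∀ f g : EuclideanSpace ℝ (Fin d) → ℝ,
        LocallyIntegrableOn f D → zygSeminorm ω n D f < ⊤ → l1Norm D f < ⊤ →
        IsRestrictedCZ D K f g →
        LocallyIntegrableOn g D ∧
          zygSeminorm ω n D g + l1Norm D g ≤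
            ENNReal.ofReal C' * (zygSeminorm ω n D f + l1Norm D f)) :
    (∀ P ∈ PolyLE d n, ∀ g : EuclideanSpace ℝ (Fin d) → ℝ,
      IsRestrictedCZ D K P g →
        LocallyIntegrableOn g D ∧ zygSeminorm ω n D g < ⊤) ∧
    (∃ C : ℝ, 0 < C ∧
      ∀ (x₀ : EuclideanSpace ℝ (Fin d)) (l : ℝ), 0 < l → cube x₀ l ⊆ D →
        ∀ P : EuclideanSpace ℝ (Fin d) → ℝ,
          (∃ p : MvPolynomial (Fin d) ℝ, p.IsHomogeneous n ∧
            ∀ x, P x = MvPolynomial.eval (fun i => x i - x₀ i) p) →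
          ∀ g : EuclideanSpace ℝ (Fin d) → ℝ, IsRestrictedCZ D K P g →
            ∃ S ∈ PolyLE d n,
              (ENNReal.ofReal (l ^ d))⁻¹ *
                  ∫⁻ x in cube x₀ l, ENNReal.ofReal |g x - S x| ≤
                ENNReal.ofReal (C * sSup ((fun x => |P x|) '' D) * omegaTilde ω n l)) := by
  exact main_thm ω hω D hD Ω K hΩ hK hbdd

end
end

section
/- Let ω be a modulus of continuity of order n ∈ ℕ and let D ⊂ ℝ^d be a bounded Lipschitz domain. Then every f ∈ L¹_loc(D) with finite interior Zygmund seminorm ‖f‖^{int}_{ω,D} < ∞ belongs to L¹(D). -/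
open MeasureTheory Filter Set Metric
open scoped ENNReal Topology InnerProductSpace

noncomputable section

/-- The interior Zygmund seminorm `‖f‖^{int}_{ω,D}`: the supremum is taken only over
cubes `Q` with `2Q ⊂ D`. -/
def zygSeminormInt {d : ℕ} (ω : ℝ → ℝ) (n : ℕ) (D : Set (EuclideanSpace ℝ (Fin d)))
    (f : EuclideanSpace ℝ (Fin d) → ℝ) : ℝ≥0∞ :=
  ⨆ (x₀ : EuclideanSpace ℝ (Fin d)) (l : ℝ) (_ : 0 < l) (_ : cube x₀ (2 * l) ⊆ D),
    ⨅ (P : EuclideanSpace ℝ (Fin d) → ℝ) (_ : P ∈ PolyLE d n),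
      (ENNReal.ofReal (ω l * l ^ d))⁻¹ * ∫⁻ x in cube x₀ l, ENNReal.ofReal |f x - P x|

/-- Binomial coefficients with sign, of the `m`-th forward difference. -/
def dcoef (m i : ℕ) : ℝ := (-1 : ℝ) ^ (m - i) * (m.choose i : ℝ)

lemma dcoef_zero (m : ℕ) : |dcoef m 0| = 1 := by
  simp [dcoef]

lemma sum_dcoef_eq {E : Type*} [AddCommGroup E] [Module ℝ E] (m : ℕ) (f : E → ℝ) (x w : E) :
    ∑ i ∈ Finset.range (m + 1), dcoef m i * f (x + (i : ℝ) • w) = (fwdDiff w)^[m] f x := by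
  rw [fwdDiff_iter_eq_sum_shift]
  refine Finset.sum_congr rfl fun i _ => ?_
  rw [Nat.cast_smul_eq_nsmul, zsmul_eq_mul, dcoef]
  push_cast
  ring

lemma sum_dcoef_expand {E : Type*} [AddCommGroup E] [Module ℝ E] (m N : ℕ) :
    ∃ (M : ℕ) (q : ℕ → ℝ), ∀ (f : E → ℝ) (x w : E),
      ∑ i ∈ Finset.range (m + 1), dcoef m i * f (x + ((i : ℝ) * N) • w) =
      ∑ j ∈ Finset.range M, q j *
        ∑ i ∈ Finset.range (m + 1), dcoef m i * f (x + ((j : ℝ) + i) • w) := by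
  let Q : Polynomial ℤ := (∑ j ∈ Finset.range N, Polynomial.X ^ j) ^ m
  refine ⟨Q.natDegree + 1, fun j => (Q.coeff j : ℝ), fun f x w => ?_⟩
  have h1 := sum_dcoef_eq m f x ((N : ℝ) • w)
  simp_rw [smul_smul] at h1
  rw [h1]
  have h2 : ∀ j : ℕ, ∑ i ∈ Finset.range (m + 1), dcoef m i * f (x + ((j : ℝ) + i) • w)
      = (fwdDiff w)^[m] f (x + j • w) := by
    intro j
    rw [← sum_dcoef_eq]
    refine Finset.sum_congr rfl fun i _ => ?_
    rw [add_smul, add_assoc, Nat.cast_smul_eq_nsmul ℝ j]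
  simp_rw [h2]
  have e1 : fwdDiff_aux.fwdDiffₗ E ℝ ((N : ℝ) • w) =
      (∑ j ∈ Finset.range N, (fwdDiff_aux.shiftₗ E ℝ w) ^ j) * fwdDiff_aux.fwdDiffₗ E ℝ w := by
    have : fwdDiff_aux.fwdDiffₗ E ℝ w = fwdDiff_aux.shiftₗ E ℝ w - 1 := by
      simp [fwdDiff_aux.shiftₗ]
    rw [this, geom_sum_mul]
    ext g y
    simp [fwdDiff_aux.shiftₗ_pow_apply, fwdDiff, Nat.cast_smul_eq_nsmul]
  have hc : Commute (∑ j ∈ Finset.range N, (fwdDiff_aux.shiftₗ E ℝ w) ^ j)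
      (fwdDiff_aux.fwdDiffₗ E ℝ w) := by
    have : fwdDiff_aux.fwdDiffₗ E ℝ w = fwdDiff_aux.shiftₗ E ℝ w - 1 := by
      simp [fwdDiff_aux.shiftₗ]
    rw [this]
    exact Commute.sub_right (Commute.sum_left _ _ _ fun i _ => Commute.pow_self _ _)
      (Commute.one_right _)
  have e2 : Polynomial.aeval (fwdDiff_aux.shiftₗ E ℝ w) Q =
      (∑ j ∈ Finset.range N, (fwdDiff_aux.shiftₗ E ℝ w) ^ j) ^ m := by
    simp [Q]
  rw [← fwdDiff_aux.coe_fwdDiffₗ_pow, e1, hc.mul_pow, ← e2, Polynomial.aeval_eq_sum_range,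
    Module.End.mul_apply, ← fwdDiff_aux.coe_fwdDiffₗ_pow]
  rw [LinearMap.sum_apply, Finset.sum_apply]
  refine Finset.sum_congr rfl fun j _ => ?_
  rw [LinearMap.smul_apply, Pi.smul_apply, fwdDiff_aux.shiftₗ_pow_apply, zsmul_eq_mul]

lemma sum_dcoef_poly {d n : ℕ} {P : EuclideanSpace ℝ (Fin d) → ℝ} (hP : P ∈ PolyLE d n)
    (x w : EuclideanSpace ℝ (Fin d)) :
    ∑ i ∈ Finset.range (n + 1 + 1), dcoef (n + 1) i * P (x + (i : ℝ) • w) = 0 := by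
  obtain ⟨p, hp, hpP⟩ := hP
  let A : Polynomial ℝ :=
    MvPolynomial.aeval (fun i => Polynomial.C (x i) + Polynomial.X * Polynomial.C (w i)) p
  have hA : A.natDegree < n + 1 := by
    have := MvPolynomial.aeval_natDegree_le p hp
      (fun i => Polynomial.C (x i) + Polynomial.X * Polynomial.C (w i) : Fin d → Polynomial ℝ)
      (n := 1) (fun i => by compute_degree)
    simp only [A]; omega
  have h0 := congr_fun (Polynomial.fwdDiff_iter_eq_zero_of_degree_lt hA) 0
  rw [← sum_dcoef_eq] at h0
  refine Eq.trans ?_ (h0.trans (by simp))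
  refine Finset.sum_congr rfl fun i _ => ?_
  congr 1
  rw [← hpP]
  have : (Polynomial.evalRingHom ((0:ℝ) + (i : ℝ) • (1:ℝ))) A = 
    MvPolynomial.eval (fun k => (x + (i:ℝ) • w) k) p := by
    simp only [A, MvPolynomial.aeval_def, MvPolynomial.eval₂_comp_left]
    simp only [MvPolynomial.eval]
    rw [MvPolynomial.coe_eval₂Hom]
    congr 1
    · ext; simp
    · funext k; simp; ring
  simpa using this.symm

lemma measurable_poly {d n : ℕ} {P : EuclideanSpace ℝ (Fin d) → ℝ} (hP : P ∈ PolyLE d n) :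
    Measurable P := by
  obtain ⟨p, hp, hpP⟩ := hP
  have : P = fun x => MvPolynomial.eval (fun i => x i) p := by funext x; rw [hpP]
  rw [this]
  refine Continuous.measurable ?_
  exact (MvPolynomial.continuous_eval p).comp (by fun_prop)

/-- `t` is a height function in the direction `v`. -/
structure IsHeight {d : ℕ} (v : EuclideanSpace ℝ (Fin d)) (t : EuclideanSpace ℝ (Fin d) → ℝ)
    (L : ℝ) : Prop where
  norm_v : ‖v‖ ≤ 1
  one_le : 1 ≤ L
  lip : ∀ x y, |t x - t y| ≤ L * dist x y
  shift : ∀ x c, t (x + c • v) = t x + c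

/-- Vertical scaling. -/
def Phi {d : ℕ} (v : EuclideanSpace ℝ (Fin d)) (t : EuclideanSpace ℝ (Fin d) → ℝ) (s : ℝ)
    (x : EuclideanSpace ℝ (Fin d)) : EuclideanSpace ℝ (Fin d) := x + (s * t x) • v

/-- Projection onto the graph. -/
def Pj {d : ℕ} (v : EuclideanSpace ℝ (Fin d)) (t : EuclideanSpace ℝ (Fin d) → ℝ)
    (x : EuclideanSpace ℝ (Fin d)) : EuclideanSpace ℝ (Fin d) := x - (t x) • v

section height
variable {d : ℕ} {v : EuclideanSpace ℝ (Fin d)} {t : EuclideanSpace ℝ (Fin d) → ℝ} {L : ℝ}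

lemma IsHeight.continuous (h : IsHeight v t L) : Continuous t := by
  have : LipschitzWith (Real.toNNReal L) t := by
    refine LipschitzWith.of_dist_le_mul fun x y => ?_
    rw [Real.coe_toNNReal _ (by linarith [h.one_le]), Real.dist_eq]
    exact h.lip x y
  exact this.continuous

lemma IsHeight.t_Phi (h : IsHeight v t L) (s : ℝ) (x) : t (Phi v t s x) = (1 + s) * t x := by
  rw [Phi, h.shift]; ring

lemma IsHeight.Pj_Phi (h : IsHeight v t L) (s : ℝ) (x) : Pj v t (Phi v t s x) = Pj v t x := by
  rw [Pj, h.t_Phi, Phi, Pj]; module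

lemma IsHeight.Phi_Phi (h : IsHeight v t L) (s s' : ℝ) (x) :
    Phi v t s' (Phi v t s x) = Phi v t (s + s' * (1 + s)) x := by
  rw [Phi, h.t_Phi, Phi, Phi]; module

lemma IsHeight.measurable_Phi (h : IsHeight v t L) (s : ℝ) : Measurable (Phi v t s) := by
  have := h.continuous
  refine Continuous.measurable ?_
  unfold Phi
  fun_prop

lemma IsHeight.lintegral_aux (h : IsHeight v t L) {F : EuclideanSpace ℝ (Fin d) → ℝ≥0∞}
    (hF : Measurable F) {s : ℝ} (hs : 0 ≤ s) :
    ∫⁻ x, F (Phi v t s x) = ENNReal.ofReal (1 + s)⁻¹ *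
      ∫⁻ x, (Icc (0:ℝ) 1).indicator 1 (t x) * ∫⁻ c : ℝ, F (x + c • v) := by
  have hψ : Measurable ((Icc (0:ℝ) 1).indicator (1 : ℝ → ℝ≥0∞)) :=
    measurable_one.indicator measurableSet_Icc
  have ht := h.continuous.measurable
  have hΦ := h.measurable_Phi s
  calc ∫⁻ x, F (Phi v t s x)
      = ∫⁻ x, ∫⁻ c : ℝ, F (Phi v t s x) * (Icc (0:ℝ) 1).indicator 1 (c + t x) := by
        refine lintegral_congr fun x => ?_
        rw [lintegral_const_mul _ (by fun_prop),
          lintegral_add_right_eq_self (fun c => (Icc (0:ℝ) 1).indicator (1 : ℝ → ℝ≥0∞) c),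
          lintegral_indicator_one measurableSet_Icc]
        simp
    _ = ∫⁻ c : ℝ, ∫⁻ x, F (Phi v t s x) * (Icc (0:ℝ) 1).indicator 1 (c + t x) := by
        refine lintegral_lintegral_swap (Measurable.aemeasurable ?_)
        unfold Function.uncurry
        fun_prop
    _ = ∫⁻ c : ℝ, ∫⁻ x, F (x + (s * t x - (1 + s) * c) • v) *
          (Icc (0:ℝ) 1).indicator 1 (t x) := by
        refine lintegral_congr fun c => ?_
        rw [← lintegral_add_right_eq_self _ ((-c) • v)]
        refine lintegral_congr fun x => ?_
        rw [Phi, h.shift]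
        congr 2
        · module
        · ring
    _ = ∫⁻ x, ∫⁻ c : ℝ, F (x + (s * t x - (1 + s) * c) • v) *
          (Icc (0:ℝ) 1).indicator 1 (t x) := by
        refine lintegral_lintegral_swap (Measurable.aemeasurable ?_)
        unfold Function.uncurry
        fun_prop
    _ = _ := by
        rw [← lintegral_const_mul _ ?_]
        swap
        · refine Measurable.mul (by fun_prop) (Measurable.lintegral_prod_right ?_)
          unfold Function.uncurry
          fun_prop
        refine lintegral_congr fun x => ?_
        rw [lintegral_mul_const _ (by fun_prop), mul_comm, mul_left_comm]
        congr 1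
        have hG : Measurable fun c : ℝ => F (x + c • v) := by fun_prop
        have hne : -(1 + s) ≠ 0 := by linarith
        have h1 := Real.map_volume_mul_left hne
        have h2 : ∫⁻ c : ℝ, F (x + (s * t x - (1 + s) * c) • v)
            = ∫⁻ c : ℝ, (fun c => F (x + (c + s * t x) • v)) ((-(1 + s)) * c) := by
          refine lintegral_congr fun c => ?_
          simp only []
          congr 3; ring
        rw [h2, ← lintegral_map (μ := volume) (f := fun c => F (x + (c + s * t x) • v))
          (g := fun c => -(1 + s) * c) (by fun_prop) (by fun_prop), h1, lintegral_smul_measure,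
          lintegral_add_right_eq_self (fun c => F (x + c • v))]
        rw [smul_eq_mul]
        congr 2
        rw [abs_inv, abs_neg, abs_of_pos (by linarith)]

lemma IsHeight.lintegral_Phi (h : IsHeight v t L) {F : EuclideanSpace ℝ (Fin d) → ℝ≥0∞}
    (hF : Measurable F) {s : ℝ} (hs : 0 ≤ s) :
    ∫⁻ x, F (Phi v t s x) = ENNReal.ofReal (1 + s)⁻¹ * ∫⁻ x, F x := by
  rw [h.lintegral_aux hF hs]
  have := h.lintegral_aux hF le_rfl
  simp only [Phi, zero_mul, zero_smul, add_zero, inv_one, ENNReal.ofReal_one, one_mul] at this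
  rw [this]

lemma IsHeight.lintegral_Phi_le (h : IsHeight v t L) {F : EuclideanSpace ℝ (Fin d) → ℝ≥0∞}
    (hF : Measurable F) {s : ℝ} (hs : 0 ≤ s) :
    ∫⁻ x, F (Phi v t s x) ≤ ∫⁻ x, F x := by
  rw [h.lintegral_Phi hF hs]
  refine mul_le_of_le_one_left (by positivity) ?_
  rw [ENNReal.ofReal_le_one]
  exact inv_le_one_of_one_le₀ (by linarith)

end height

/-- Finite difference of `f` with step proportional to the height. -/
def dd {d : ℕ} (m : ℕ) (f : EuclideanSpace ℝ (Fin d) → ℝ) (v : EuclideanSpace ℝ (Fin d))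
    (t : EuclideanSpace ℝ (Fin d) → ℝ) (s : ℝ) (x : EuclideanSpace ℝ (Fin d)) : ℝ :=
  ∑ i ∈ Finset.range (m + 1), dcoef m i * f (Phi v t (i * s) x)

/-- Local approximation property on balls. -/
def Camp {d : ℕ} (m : ℕ) (f : EuclideanSpace ℝ (Fin d) → ℝ) (D : Set (EuclideanSpace ℝ (Fin d)))
    (K : ℝ≥0∞) (κ R0 : ℝ) : Prop :=
  ∀ (y : EuclideanSpace ℝ (Fin d)) (ρ : ℝ), 0 < ρ → ρ ≤ R0 → ball y (κ * ρ) ⊆ D →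
    ∃ P : EuclideanSpace ℝ (Fin d) → ℝ, Measurable P ∧
      (∀ x w, ∑ i ∈ Finset.range (m + 1), dcoef m i * P (x + (i : ℝ) • w) = 0) ∧
      ∫⁻ x in ball y ρ, ‖f x - P x‖ₑ ≤ K * ENNReal.ofReal (ρ ^ d)

section main
variable {d : ℕ} {v : EuclideanSpace ℝ (Fin d)} {t : EuclideanSpace ℝ (Fin d) → ℝ} {L : ℝ}
  {m : ℕ} {f : EuclideanSpace ℝ (Fin d) → ℝ} {D : Set (EuclideanSpace ℝ (Fin d))}
  {K : ℝ≥0∞} {κ R0 : ℝ}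

lemma measurable_dd (h : IsHeight v t L) (hf : Measurable f) (s : ℝ) :
    Measurable (dd m f v t s) := by
  unfold dd
  refine Finset.measurable_sum _ fun i _ => ?_
  exact (hf.comp (h.measurable_Phi _)).const_mul _

lemma dist_Phi (h : IsHeight v t L) {s : ℝ} (hs : 0 ≤ s) {x} (hx : 0 ≤ t x) :
    dist (Phi v t s x) x ≤ s * t x := by
  rw [Phi, dist_self_add_left, norm_smul, Real.norm_eq_abs, abs_of_nonneg (by positivity)]
  exact mul_le_of_le_one_right (by positivity) h.norm_v

lemma inner_bound (h : IsHeight v t L) (hf : Measurable f) (hC : Camp m f D K κ R0)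
    {y : EuclideanSpace ℝ (Fin d)} {c s : ℝ} (hc : 0 < c) (hcL : c * L ≤ 1 / 8) (hs : 0 ≤ s)
    (hms : m * s ≤ c / 2) (hty : 0 < t y) (hρ : 2 * c * t y ≤ R0)
    (hb : ball y (κ * (2 * c * t y)) ⊆ D) :
    ∫⁻ x in ball y (c * t y), ‖dd m f v t s x‖ₑ ≤
      (∑ i ∈ Finset.range (m + 1), ‖dcoef m i‖ₑ) * (K * ENNReal.ofReal ((2 * c * t y) ^ d)) := by
  obtain ⟨P, hPm, hP0, hP⟩ := hC y (2 * c * t y) (by positivity) hρ hb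
  set G : EuclideanSpace ℝ (Fin d) → ℝ≥0∞ :=
    (ball y (2 * c * t y)).indicator (fun x => ‖f x - P x‖ₑ) with hG
  have hGm : Measurable G := by
    refine Measurable.indicator ?_ measurableSet_ball
    fun_prop
  have key : ∀ x ∈ ball y (c * t y), ‖dd m f v t s x‖ₑ ≤
      ∑ i ∈ Finset.range (m + 1), ‖dcoef m i‖ₑ * G (Phi v t (i * s) x) := by
    intro x hx
    rw [mem_ball] at hx
    have hl := abs_le.1 (h.lip x y)
    have h2 : L * dist x y ≤ 1 / 8 * t y := by
      calc L * dist x y ≤ L * (c * t y) := by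
            have := h.one_le
            gcongr
        _ = (c * L) * t y := by ring
        _ ≤ _ := by gcongr
    have e : dd m f v t s x =
        ∑ i ∈ Finset.range (m + 1), dcoef m i * (f - P) (Phi v t (i * s) x) := by
      have h0 := hP0 x ((s * t x) • v)
      have h1 : ∑ i ∈ Finset.range (m + 1), dcoef m i * P (Phi v t (i * s) x) = 0 := by
        rw [← h0]
        refine Finset.sum_congr rfl fun i _ => ?_
        rw [Phi, smul_smul, mul_assoc]
      simp only [Pi.sub_apply, mul_sub, Finset.sum_sub_distrib, h1, sub_zero, dd]
    rw [e]
    refine (enorm_sum_le _ _).trans (Finset.sum_le_sum fun i hi => ?_)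
    rw [enorm_mul]
    gcongr
    have hi' : (i : ℝ) ≤ m := by
      have := Finset.mem_range.1 hi
      exact_mod_cast (by omega : i ≤ m)
    have : Phi v t (i * s) x ∈ ball y (2 * c * t y) := by
      rw [mem_ball]
      have d1 := dist_Phi h (s := i * s) (by positivity) (x := x) (by linarith)
      have d2 : (i * s) * t x ≤ c / 2 * (9 / 8 * t y) := by
        have : i * s ≤ c / 2 := le_trans (by gcongr) hms
        refine mul_le_mul this (by linarith) (by linarith) (by positivity)
      have d3 := dist_triangle (Phi v t (i * s) x) x y
      nlinarith [mul_pos hc hty]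
    rw [hG, indicator_of_mem this]
    rfl
  calc ∫⁻ x in ball y (c * t y), ‖dd m f v t s x‖ₑ
      ≤ ∫⁻ x in ball y (c * t y),
          ∑ i ∈ Finset.range (m + 1), ‖dcoef m i‖ₑ * G (Phi v t (i * s) x) :=
        setLIntegral_mono' measurableSet_ball key
    _ ≤ ∫⁻ x, ∑ i ∈ Finset.range (m + 1), ‖dcoef m i‖ₑ * G (Phi v t (i * s) x) :=
        setLIntegral_le_lintegral _ _
    _ = ∑ i ∈ Finset.range (m + 1), ‖dcoef m i‖ₑ * ∫⁻ x, G (Phi v t (i * s) x) := by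
        have hm : ∀ i : ℕ, Measurable fun x => G (Phi v t (i * s) x) :=
          fun i => hGm.comp (h.measurable_Phi _)
        rw [lintegral_finsetSum _ (fun i _ => (hm i).const_mul _)]
        refine Finset.sum_congr rfl fun i _ => ?_
        rw [lintegral_const_mul _ (hm i)]
    _ ≤ ∑ i ∈ Finset.range (m + 1), ‖dcoef m i‖ₑ * ∫⁻ x, G x := by
        refine Finset.sum_le_sum fun i _ => ?_
        exact mul_le_mul_right (h.lintegral_Phi_le hGm (by positivity)) _
    _ ≤ _ := by
        rw [← Finset.sum_mul]
        gcongr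
        rw [hG, lintegral_indicator measurableSet_ball]
        exact hP

/-- Cylinder over a piece of the graph. -/
def Cyl {d : ℕ} (v : EuclideanSpace ℝ (Fin d)) (t : EuclideanSpace ℝ (Fin d) → ℝ)
    (a : EuclideanSpace ℝ (Fin d)) (r τ₁ τ : ℝ) : Set (EuclideanSpace ℝ (Fin d)) :=
  {x | dist (Pj v t x) a < r ∧ τ₁ < t x ∧ t x < τ}

lemma measurableSet_Cyl (h : IsHeight v t L) (a : EuclideanSpace ℝ (Fin d)) (r τ₁ τ : ℝ) :
    MeasurableSet (Cyl v t a r τ₁ τ) := by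
  have := h.continuous
  have h2 : Continuous (Pj v t) := by unfold Pj; fun_prop
  have e : Cyl v t a r τ₁ τ =
      {x | dist (Pj v t x) a < r} ∩ ({x | τ₁ < t x} ∩ {x | t x < τ}) := by
    ext x; simp [Cyl]
  rw [e]
  exact (measurableSet_lt (by fun_prop) (by fun_prop)).inter
    ((measurableSet_lt (by fun_prop) (by fun_prop)).inter
      (measurableSet_lt (by fun_prop) (by fun_prop)))

lemma dist_Pj (h : IsHeight v t L) {x} (hx : 0 ≤ t x) : dist x (Pj v t x) ≤ t x := by
  rw [Pj, dist_self_sub_right, norm_smul, Real.norm_eq_abs, abs_of_nonneg hx]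
  exact mul_le_of_le_one_right hx h.norm_v

lemma base_bound (h : IsHeight v t L) (hf : Measurable f) (hC : Camp m f D K κ R0)
    (hK : K ≠ ⊤) (hκ : 1 ≤ κ) (hR : 0 < R0) (a : EuclideanSpace ℝ (Fin d))
    (hD : ∀ x ∈ ball a R0, 0 < t x → x ∈ D) :
    ∃ (s₀ : ℝ) (C : ℝ≥0∞), 0 < s₀ ∧ C ≠ ⊤ ∧ ∀ s, 0 ≤ s → s ≤ s₀ →
      ∫⁻ x in Cyl v t a (R0 / 4) 0 (R0 / 4), ‖dd m f v t s x‖ₑ ≤ C := by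
  have hL := h.one_le
  set c : ℝ := 1 / (8 * κ * L) with hcdef
  have hc : 0 < c := by positivity
  have hcκL : c * κ * L = 1 / 8 := by rw [hcdef]; field_simp
  have hcL : c * L ≤ 1 / 8 := by
    rw [← hcκL]; nlinarith [mul_pos hc (by linarith : 0 < L)]
  have hcκ : c * κ ≤ 1 / 8 := by
    rw [← hcκL]; nlinarith [mul_pos hc (by linarith : 0 < κ)]
  have hc8 : c ≤ 1 / 8 := by nlinarith
  set V : ℝ≥0∞ := volume (ball (0 : EuclideanSpace ℝ (Fin d)) 1) with hV
  have hV0 : V ≠ 0 := (measure_ball_pos _ _ one_pos).ne'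
  have hVt : V ≠ ⊤ := measure_ball_lt_top.ne
  have hvol : ∀ (x : EuclideanSpace ℝ (Fin d)) (r : ℝ), 0 < r →
      volume (ball x r) = ENNReal.ofReal (r ^ d) * V := by
    intro x r hr
    rw [Measure.addHaar_ball_of_pos _ _ hr]
    simp [hV]
  set B : ℝ≥0∞ := (∑ i ∈ Finset.range (m + 1), ‖dcoef m i‖ₑ) with hB
  have hBt : B ≠ ⊤ := by
    rw [hB]; exact ENNReal.sum_ne_top.2 fun i _ => enorm_ne_top
  set C1 : ℝ≥0∞ := ENNReal.ofReal (8 ^ d) * B * K * V⁻¹ with hC1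
  have hC1t : C1 ≠ ⊤ := by
    refine ENNReal.mul_ne_top (ENNReal.mul_ne_top (ENNReal.mul_ne_top ?_ hBt) hK) ?_
    · exact ENNReal.ofReal_ne_top
    · exact ENNReal.inv_ne_top.2 hV0
  refine ⟨c / (2 * (m + 1)), C1 * volume (ball a R0), by positivity,
    ENNReal.mul_ne_top hC1t measure_ball_lt_top.ne, fun s hs hs₀ => ?_⟩
  have hms : m * s ≤ c / 2 := by
    calc m * s ≤ (m + 1) * (c / (2 * (m + 1))) := by gcongr; linarith
      _ = c / 2 := by field_simp
  set S := Cyl v t a (R0 / 4) 0 (R0 / 4) with hS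
  have hSm : MeasurableSet S := measurableSet_Cyl h _ _ _ _
  have htm := h.continuous.measurable
  have hdm := measurable_dd (m := m) h hf s
  set w : EuclideanSpace ℝ (Fin d) → ℝ≥0∞ := fun x => ENNReal.ofReal ((c / 2 * t x) ^ d) * V with hw
  set F : EuclideanSpace ℝ (Fin d) → ℝ≥0∞ := S.indicator (fun x => ‖dd m f v t s x‖ₑ) with hF
  have hFm : Measurable F := Measurable.indicator (by fun_prop) hSm
  set T : Set (EuclideanSpace ℝ (Fin d) × EuclideanSpace ℝ (Fin d)) :=
    {p | dist p.1 p.2 < c / 2 * t p.1} with hT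
  have hTm : MeasurableSet T :=
    measurableSet_lt (by fun_prop) (by fun_prop)
  set J : EuclideanSpace ℝ (Fin d) → EuclideanSpace ℝ (Fin d) → ℝ≥0∞ :=
    fun x y => F x * (w x)⁻¹ * T.indicator 1 (x, y) with hJ
  have hwm : Measurable w := by fun_prop
  have hJm : Measurable (Function.uncurry J) := by
    have : Measurable (T.indicator (1 : EuclideanSpace ℝ (Fin d) × EuclideanSpace ℝ (Fin d) → ℝ≥0∞)) :=
      measurable_one.indicator hTm
    have h2 : Measurable fun x => F x * (w x)⁻¹ := hFm.mul hwm.inv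
    exact (h2.comp measurable_fst).mul this
  have step1 : ∫⁻ x in S, ‖dd m f v t s x‖ₑ = ∫⁻ x, ∫⁻ y, J x y := by
    rw [← lintegral_indicator hSm]
    refine lintegral_congr fun x => ?_
    by_cases hx : x ∈ S
    · have htx : 0 < t x := hx.2.1
      have e1 : ∀ y, T.indicator (1 : EuclideanSpace ℝ (Fin d) × EuclideanSpace ℝ (Fin d) → ℝ≥0∞) (x, y) = (ball x (c / 2 * t x)).indicator 1 y := by
        intro y
        simp only [indicator, hT, mem_ofPred_eq, mem_ball, dist_comm x y, Pi.one_apply]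
      simp only [hJ, e1]
      rw [lintegral_const_mul _ (measurable_one.indicator measurableSet_ball),
        lintegral_indicator_one measurableSet_ball, hvol _ _ (by positivity), mul_assoc,
        ENNReal.inv_mul_cancel, mul_one]
      · refine mul_ne_zero ?_ hV0
        rw [ENNReal.ofReal_ne_zero_iff]; positivity
      · exact ENNReal.mul_ne_top ENNReal.ofReal_ne_top hVt
    · simp [hJ, hF, hx]
  rw [step1, lintegral_lintegral_swap hJm.aemeasurable]
  have good : ∀ x y, x ∈ S → (x, y) ∈ T → dist y a < 5 / 8 * R0 ∧ 0 < t y ∧ t y ≤ R0 / 2 ∧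
      dist x y < c * t y ∧ t y ≤ 2 * t x := by
    intro x y hx hxy
    obtain ⟨hx1, hx2, hx3⟩ := hx
    simp only [hT, mem_ofPred_eq] at hxy
    have hl := abs_le.1 (h.lip x y)
    have h2 : L * dist x y ≤ 1 / 16 * t x := by
      calc L * dist x y ≤ L * (c / 2 * t x) := by gcongr
        _ = (c * L) / 2 * t x := by ring
        _ ≤ 1 / 8 / 2 * t x := by gcongr
        _ = _ := by ring
    have d1 := dist_Pj h hx2.le
    have d2 := dist_triangle4 y x (Pj v t x) a
    rw [dist_comm y x] at d2
    refine ⟨?_, by linarith, by linarith, ?_, by linarith⟩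
    · nlinarith
    · nlinarith
  have step2 : ∀ y, ∫⁻ x, J x y ≤ (ball a R0).indicator (fun _ => C1) y := by
    intro y
    by_cases hy : ∃ x ∈ S, (x, y) ∈ T
    · obtain ⟨x₀, hx₀, hx₀y⟩ := hy
      obtain ⟨g1, g2, g3, -, -⟩ := good x₀ y hx₀ hx₀y
      have hya : y ∈ ball a R0 := by rw [mem_ball]; linarith
      rw [indicator_of_mem hya]
      have hball : ball y (κ * (2 * c * t y)) ⊆ D := by
        intro z hz
        rw [mem_ball] at hz
        have hk : κ * (2 * c * t y) ≤ 1 / 4 * t y := by nlinarith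
        have hl := abs_le.1 (h.lip z y)
        have h2 : L * dist z y ≤ 1 / 4 * t y := by
          calc L * dist z y ≤ L * (κ * (2 * c * t y)) := by gcongr
            _ = 2 * (c * κ * L) * t y := by ring
            _ = 1 / 4 * t y := by rw [hcκL]; ring
        refine hD z ?_ (by linarith)
        rw [mem_ball]
        linarith [dist_triangle z y a]
      have ib := inner_bound (m := m) h hf hC hc hcL hs hms g2 (by nlinarith) hball
      calc ∫⁻ x, J x y ≤ ∫⁻ x, (ENNReal.ofReal ((c / 4 * t y) ^ d) * V)⁻¹ *
            (ball y (c * t y)).indicator (fun x => ‖dd m f v t s x‖ₑ) x := by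
            refine lintegral_mono fun x => ?_
            by_cases hxS : x ∈ S
            swap
            · simp [hJ, hF, hxS]
            by_cases hxT : (x, y) ∈ T
            swap
            · simp [hJ, hxT]
            obtain ⟨_, _, _, k4, k5⟩ := good x y hxS hxT
            simp only [hJ, hF, indicator_of_mem hxS, indicator_of_mem hxT, Pi.one_apply, mul_one]
            rw [indicator_of_mem (by rwa [mem_ball]), mul_comm]
            have hle : ENNReal.ofReal ((c / 4 * t y) ^ d) * V ≤ w x := by
              refine mul_le_mul_left (ENNReal.ofReal_le_ofReal ?_) _
              refine pow_le_pow_left₀ (by positivity) ?_ _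
              nlinarith
            exact mul_le_mul_left (ENNReal.inv_le_inv.2 hle) _
        _ = (ENNReal.ofReal ((c / 4 * t y) ^ d) * V)⁻¹ *
            ∫⁻ x in ball y (c * t y), ‖dd m f v t s x‖ₑ := by
            rw [lintegral_const_mul _ (Measurable.indicator (by fun_prop) measurableSet_ball),
              lintegral_indicator measurableSet_ball]
        _ ≤ (ENNReal.ofReal ((c / 4 * t y) ^ d) * V)⁻¹ *
            (B * (K * ENNReal.ofReal ((2 * c * t y) ^ d))) := by gcongr
        _ = C1 := by
            have e : (2 * c * t y) ^ d = 8 ^ d * (c / 4 * t y) ^ d := by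
              rw [← mul_pow]; congr 1; ring
            rw [e, ENNReal.ofReal_mul (by positivity), ENNReal.mul_inv (Or.inr hVt) (Or.inr hV0),
              hC1]
            have hp0 : ENNReal.ofReal ((c / 4 * t y) ^ d) ≠ 0 := by
              rw [ENNReal.ofReal_ne_zero_iff]; positivity
            have hpt : ENNReal.ofReal ((c / 4 * t y) ^ d) ≠ ⊤ := ENNReal.ofReal_ne_top
            generalize ENNReal.ofReal ((c / 4 * t y) ^ d) = p at *
            generalize ENNReal.ofReal (8 ^ d) = q
            calc p⁻¹ * V⁻¹ * (B * (K * (q * p))) = (p⁻¹ * p) * (q * B * K * V⁻¹) := by ring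
              _ = _ := by rw [ENNReal.inv_mul_cancel hp0 hpt, one_mul]
    · have : ∀ x, J x y = 0 := by
        intro x
        by_cases hxS : x ∈ S
        · have : (x, y) ∉ T := fun hh => hy ⟨x, hxS, hh⟩
          simp [hJ, this]
        · simp [hJ, hF, hxS]
      simp [this]
  calc ∫⁻ y, ∫⁻ x, J x y ≤ ∫⁻ y, (ball a R0).indicator (fun _ => C1) y := lintegral_mono step2
    _ = _ := by rw [lintegral_indicator measurableSet_ball, setLIntegral_const]

lemma Phi_mem_Cyl (h : IsHeight v t L) {a x : EuclideanSpace ℝ (Fin d)} {r ε τ τ' s : ℝ}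
    (hε : 0 ≤ ε) (hs : 0 ≤ s) (hx : x ∈ Cyl v t a r ε τ) (hτ : (1 + s) * τ ≤ τ') :
    Phi v t s x ∈ Cyl v t a r ε τ' := by
  obtain ⟨h1, h2, h3⟩ := hx
  refine ⟨by rwa [h.Pj_Phi], ?_, ?_⟩
  · rw [h.t_Phi]; nlinarith
  · rw [h.t_Phi]
    refine lt_of_lt_of_le ?_ hτ
    gcongr

lemma dd_expand (h : IsHeight v t L) (m N : ℕ) : ∃ (M : ℕ) (q : ℕ → ℝ),
    ∀ (f : EuclideanSpace ℝ (Fin d) → ℝ) (s : ℝ) (x), 0 ≤ s →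
    dd m f v t (N * s) x = ∑ j ∈ Finset.range M, q j *
      dd m f v t (s / (1 + j * s)) (Phi v t (j * s) x) := by
  obtain ⟨M, q, hq⟩ := sum_dcoef_expand (E := EuclideanSpace ℝ (Fin d)) m N
  refine ⟨M, q, fun f s x hs => ?_⟩
  have := hq f x ((s * t x) • v)
  calc _ = _ := ?_
    _ = _ := this
    _ = _ := ?_
  · refine Finset.sum_congr rfl fun i _ => ?_
    rw [Phi, smul_smul]
    congr 4; ring
  · refine Finset.sum_congr rfl fun j _ => ?_
    congr 1
    refine Finset.sum_congr rfl fun i _ => ?_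
    rw [h.Phi_Phi, Phi, smul_smul]
    congr 4
    have : (1 + j * s) ≠ 0 := by positivity
    field_simp

lemma big_bound (h : IsHeight v t L) (hf : Measurable f) {a : EuclideanSpace ℝ (Fin d)}
    {s₀ r τ₀ : ℝ} {C : ℝ≥0∞} (hs₀ : 0 < s₀) (hC : C ≠ ⊤) 
    (hb : ∀ s, 0 ≤ s → s ≤ s₀ → ∫⁻ x in Cyl v t a r 0 τ₀, ‖dd m f v t s x‖ₑ ≤ C)
    (hτ₀ : 0 < τ₀) (N : ℕ) {τ₁ : ℝ} (hτ₁ : 0 < τ₁) :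
    ∃ (τ : ℝ) (C' : ℝ≥0∞), 0 < τ ∧ τ ≤ τ₁ ∧ C' ≠ ⊤ ∧
      ∫⁻ x in Cyl v t a r 0 τ, ‖dd m f v t (N * s₀) x‖ₑ ≤ C' := by
  obtain ⟨M, q, hq⟩ := dd_expand h m N
  refine ⟨min τ₁ (τ₀ / (1 + M * s₀)), ∑ j ∈ Finset.range M, ‖q j‖ₑ * C, by positivity,
    min_le_left _ _, ENNReal.sum_ne_top.2 fun i _ => ENNReal.mul_ne_top enorm_ne_top hC, ?_⟩
  set τ := min τ₁ (τ₀ / (1 + M * s₀)) with hτ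
  have hSm : MeasurableSet (Cyl v t a r 0 τ₀) := measurableSet_Cyl h _ _ _ _
  set G : ℕ → EuclideanSpace ℝ (Fin d) → ℝ≥0∞ := fun j =>
    (Cyl v t a r 0 τ₀).indicator (fun x => ‖dd m f v t (s₀ / (1 + j * s₀)) x‖ₑ) with hG
  have hGm : ∀ j, Measurable (G j) := fun j =>
    Measurable.indicator (measurable_dd h hf _).enorm hSm
  have hGp : ∀ j : ℕ, Measurable fun x => G j (Phi v t (j * s₀) x) :=
    fun j => (hGm j).comp (h.measurable_Phi _)
  calc ∫⁻ x in Cyl v t a r 0 τ, ‖dd m f v t (N * s₀) x‖ₑ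
      ≤ ∫⁻ x in Cyl v t a r 0 τ, ∑ j ∈ Finset.range M, ‖q j‖ₑ * G j (Phi v t (j * s₀) x) := by
        refine setLIntegral_mono' (measurableSet_Cyl h _ _ _ _) fun x hx => ?_
        rw [hq f s₀ x hs₀.le]
        refine (enorm_sum_le _ _).trans (Finset.sum_le_sum fun j hj => ?_)
        rw [enorm_mul]
        have hj' : (j : ℝ) ≤ M := by exact_mod_cast (Finset.mem_range.1 hj).le
        have : Phi v t (j * s₀) x ∈ Cyl v t a r 0 τ₀ := by
          refine Phi_mem_Cyl h le_rfl (by positivity) hx ?_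
          calc (1 + j * s₀) * τ ≤ (1 + M * s₀) * (τ₀ / (1 + M * s₀)) := by
                gcongr
                exact min_le_right _ _
            _ = τ₀ := by field_simp
        simp only [hG]
        rw [indicator_of_mem this]
    _ ≤ ∫⁻ x, ∑ j ∈ Finset.range M, ‖q j‖ₑ * G j (Phi v t (j * s₀) x) :=
        setLIntegral_le_lintegral _ _
    _ = ∑ j ∈ Finset.range M, ‖q j‖ₑ * ∫⁻ x, G j (Phi v t (j * s₀) x) := by
        rw [lintegral_finsetSum _ (fun i _ => (hGp i).const_mul _)]
        refine Finset.sum_congr rfl fun i _ => ?_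
        rw [lintegral_const_mul _ (hGp i)]
    _ ≤ _ := by
        refine Finset.sum_le_sum fun j _ => ?_
        refine mul_le_mul_right ((h.lintegral_Phi_le (hGm j) (by positivity)).trans ?_) _
        simp only [hG]
        rw [lintegral_indicator hSm]
        refine hb _ (by positivity) ?_
        exact div_le_self hs₀.le (by nlinarith [mul_nonneg (Nat.cast_nonneg (α := ℝ) j) hs₀.le])

lemma compact_piece (h : IsHeight v t L) (hR : 0 < R0) {a : EuclideanSpace ℝ (Fin d)}
    (hD : ∀ x ∈ ball a R0, 0 < t x → x ∈ D) (hloc : LocallyIntegrableOn f D) {ε : ℝ} (hε : 0 < ε) :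
    ∫⁻ x in {x | dist (Pj v t x) a ≤ R0 / 4 ∧ ε ≤ t x ∧ t x ≤ R0 / 4}, ‖f x‖ₑ < ⊤ := by
  have hc := h.continuous
  have h2 : Continuous (Pj v t) := by unfold Pj; fun_prop
  set Q := {x | dist (Pj v t x) a ≤ R0 / 4 ∧ ε ≤ t x ∧ t x ≤ R0 / 4} with hQ
  have hsub : Q ⊆ closedBall a (R0 / 2) := by
    rintro x ⟨h1, h3, h4⟩
    have := dist_Pj h (x := x) (by linarith)
    rw [mem_closedBall]
    linarith [dist_triangle x (Pj v t x) a]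
  have hcl : IsClosed Q := by
    have e : Q = {x | dist (Pj v t x) a ≤ R0 / 4} ∩ ({x | ε ≤ t x} ∩ {x | t x ≤ R0 / 4}) := by
      ext x; simp [hQ]
    rw [e]
    exact (isClosed_le (by fun_prop) (by fun_prop)).inter
      ((isClosed_le (by fun_prop) (by fun_prop)).inter (isClosed_le (by fun_prop) (by fun_prop)))
  have hcomp : IsCompact Q := (isCompact_closedBall a (R0 / 2)).of_isClosed_subset hcl hsub
  have hQD : Q ⊆ D := fun x hx => hD x
    (by have := mem_closedBall.1 (hsub hx); rw [mem_ball]; linarith) (by linarith [hx.2.1])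
  exact ((hloc.mono_set hQD).integrableOn_isCompact hcomp).2

lemma patch (h : IsHeight v t L) (hf : Measurable f) (hC : Camp m f D K κ R0)
    (hK : K ≠ ⊤) (hκ : 1 ≤ κ) (hR : 0 < R0) (a : EuclideanSpace ℝ (Fin d))
    (hD : ∀ x ∈ ball a R0, 0 < t x → x ∈ D) (hD2 : ∀ x ∈ ball a R0, x ∈ D → 0 < t x)
    (hta : t a = 0) (hloc : LocallyIntegrableOn f D) :
    ∃ σ > 0, IntegrableOn f (D ∩ ball a σ) := by
  obtain ⟨s₀, C, hs₀, hCt, hb⟩ := base_bound h hf hC hK hκ hR a hD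
  set B : ℝ := ∑ i ∈ Finset.range m, |dcoef m (i + 1)| with hB
  obtain ⟨N, hN⟩ := exists_nat_gt ((2 * B + 1) / s₀)
  rw [div_lt_iff₀ hs₀] at hN
  set H : ℝ := N * s₀ with hH
  have hB0 : 0 ≤ B := Finset.sum_nonneg fun i _ => abs_nonneg _
  have hH0 : 0 < H := by linarith
  obtain ⟨τ, C', hτ, hτ1, hC't, hbb⟩ := big_bound h hf hs₀ hCt hb (by positivity) N
    (τ₁ := R0 / 4 / (1 + m * H)) (by positivity)
  rw [← hH] at hbb
  have hmH : (1 + m * H) * τ ≤ R0 / 4 := by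
    rw [le_div_iff₀ (by positivity)] at hτ1; linarith
  have hτR : τ ≤ R0 / 4 := hτ1.trans (div_le_self (by positivity)
    (by nlinarith [mul_nonneg (Nat.cast_nonneg (α := ℝ) m) hH0.le]))
  set M0 : ℝ≥0∞ := ∫⁻ x in {x | dist (Pj v t x) a ≤ R0 / 4 ∧ τ ≤ t x ∧ t x ≤ R0 / 4}, ‖f x‖ₑ with hM0
  have hM0t : M0 < ⊤ := compact_piece h hR hD hloc hτ
  have main : ∀ ε, 0 < ε → ∫⁻ x in Cyl v t a (R0 / 4) ε τ, ‖f x‖ₑ ≤ 2 * C' + M0 := by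
    intro ε hε
    set g : ℝ≥0∞ := ∫⁻ x in Cyl v t a (R0 / 4) ε τ, ‖f x‖ₑ with hg
    have hgt : g < ⊤ := by
      refine lt_of_le_of_lt (lintegral_mono_set ?_) (compact_piece h hR hD hloc hε)
      rintro x ⟨h1, h2, h3⟩
      exact ⟨h1.le, h2.le, by linarith⟩
    have hg' : ∫⁻ x in Cyl v t a (R0 / 4) ε (R0 / 4), ‖f x‖ₑ ≤ g + M0 := by
      refine (lintegral_mono_set ?_).trans (lintegral_union_le _ _ _)
      rintro x ⟨h1, h2, h3⟩
      by_cases hx : t x < τ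
      · exact Or.inl ⟨h1, h2, hx⟩
      · exact Or.inr ⟨h1.le, by linarith, h3.le⟩
    have hSm : MeasurableSet (Cyl v t a (R0 / 4) ε (R0 / 4)) := measurableSet_Cyl h _ _ _ _
    set G : EuclideanSpace ℝ (Fin d) → ℝ≥0∞ :=
      (Cyl v t a (R0 / 4) ε (R0 / 4)).indicator (fun x => ‖f x‖ₑ) with hG
    have hGm : Measurable G := hf.enorm.indicator hSm
    have hGi : ∫⁻ x, G x ≤ g + M0 := by rwa [hG, lintegral_indicator hSm]
    have hGp : ∀ i : ℕ, Measurable fun x => G (Phi v t (((i + 1 : ℕ) : ℝ) * H) x) :=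
      fun i => hGm.comp (h.measurable_Phi _)
    have k1 : g ≤ C' + 2⁻¹ * (g + M0) := by
      calc g ≤ ∫⁻ x in Cyl v t a (R0 / 4) ε τ, (‖dd m f v t H x‖ₑ + ∑ i ∈ Finset.range m,
            ‖dcoef m (i + 1)‖ₑ * G (Phi v t (((i + 1 : ℕ) : ℝ) * H) x)) := by
            refine setLIntegral_mono' (measurableSet_Cyl h _ _ _ _) fun x hx => ?_
            have e : dcoef m 0 * f x = dd m f v t H x - ∑ i ∈ Finset.range m,
                dcoef m (i + 1) * f (Phi v t (((i + 1 : ℕ) : ℝ) * H) x) := by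
              rw [dd, Finset.sum_range_succ']
              simp [Phi]
            have e2 : ‖f x‖ₑ = ‖dcoef m 0 * f x‖ₑ := by
              rw [enorm_mul, ← ofReal_norm (dcoef m 0), Real.norm_eq_abs, dcoef_zero]
              simp
            rw [e2, e]
            refine enorm_sub_le.trans ?_
            gcongr
            refine (enorm_sum_le _ _).trans (Finset.sum_le_sum fun i hi => ?_)
            rw [enorm_mul]
            have hi' : ((i + 1 : ℕ) : ℝ) ≤ m := by exact_mod_cast Finset.mem_range.1 hi
            have : Phi v t (((i + 1 : ℕ) : ℝ) * H) x ∈ Cyl v t a (R0 / 4) ε (R0 / 4) := by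
              refine Phi_mem_Cyl h hε.le (by positivity) hx (le_trans ?_ hmH)
              gcongr
            rw [hG, indicator_of_mem this]
        _ = (∫⁻ x in Cyl v t a (R0 / 4) ε τ, ‖dd m f v t H x‖ₑ) +
            ∫⁻ x in Cyl v t a (R0 / 4) ε τ, ∑ i ∈ Finset.range m,
            ‖dcoef m (i + 1)‖ₑ * G (Phi v t (((i + 1 : ℕ) : ℝ) * H) x) :=
            lintegral_add_left (measurable_dd h hf _).enorm _
        _ ≤ C' + ∫⁻ x, ∑ i ∈ Finset.range m,
            ‖dcoef m (i + 1)‖ₑ * G (Phi v t (((i + 1 : ℕ) : ℝ) * H) x) := by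
            refine add_le_add ((lintegral_mono_set ?_).trans hbb) (setLIntegral_le_lintegral _ _)
            rintro x ⟨h1, h2, h3⟩
            exact ⟨h1, by linarith, h3⟩
        _ = C' + ∑ i ∈ Finset.range m,
            ‖dcoef m (i + 1)‖ₑ * ∫⁻ x, G (Phi v t (((i + 1 : ℕ) : ℝ) * H) x) := by
            congr 1
            rw [lintegral_finsetSum _ (fun i _ => (hGp i).const_mul _)]
            refine Finset.sum_congr rfl fun i _ => ?_
            rw [lintegral_const_mul _ (hGp i)]
        _ ≤ C' + ∑ i ∈ Finset.range m,
            ENNReal.ofReal (|dcoef m (i + 1)| * H⁻¹) * (g + M0) := by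
            refine add_le_add le_rfl (Finset.sum_le_sum fun i _ => ?_)
            rw [h.lintegral_Phi hGm (by positivity), ← mul_assoc, ← ofReal_norm,
              Real.norm_eq_abs, ← ENNReal.ofReal_mul (abs_nonneg _)]
            refine mul_le_mul' (ENNReal.ofReal_le_ofReal ?_) hGi
            gcongr
            push_cast
            nlinarith [mul_nonneg (Nat.cast_nonneg (α := ℝ) i) hH0.le]
        _ ≤ _ := by
            refine add_le_add le_rfl ?_
            rw [← Finset.sum_mul]
            refine mul_le_mul_left ?_ _
            rw [← ENNReal.ofReal_sum_of_nonneg (fun i _ => by positivity), ← Finset.sum_mul, ← hB]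
            have : B * H⁻¹ ≤ 2⁻¹ := by
              rw [← div_eq_mul_inv, div_le_iff₀ hH0]; linarith
            refine (ENNReal.ofReal_le_ofReal this).trans ?_
            rw [ENNReal.ofReal_inv_of_pos (by norm_num)]
            simp
    have k2 : 2 * g ≤ 2 * C' + (g + M0) := by
      calc 2 * g ≤ 2 * (C' + 2⁻¹ * (g + M0)) := by gcongr
        _ = _ := by
          rw [mul_add, ← mul_assoc 2 2⁻¹, ENNReal.mul_inv_cancel (by norm_num) (by norm_num),
            one_mul]
    rw [two_mul, add_left_comm] at k2
    exact (ENNReal.add_le_add_iff_left hgt.ne).1 k2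
  have hIntg : IntegrableOn f (Cyl v t a (R0 / 4) 0 τ) := by
    refine ⟨hf.aestronglyMeasurable, ?_⟩
    have hU : Cyl v t a (R0 / 4) 0 τ = ⋃ n : ℕ, Cyl v t a (R0 / 4) (1 / ((n : ℝ) + 1)) τ := by
      ext x
      simp only [mem_iUnion]
      constructor
      · rintro ⟨h1, h2, h3⟩
        obtain ⟨n, hn⟩ := exists_nat_one_div_lt h2
        exact ⟨n, h1, hn, h3⟩
      · rintro ⟨n, h1, h2, h3⟩
        exact ⟨h1, lt_trans (by positivity) h2, h3⟩
    have hdir : Monotone fun n : ℕ => Cyl v t a (R0 / 4) (1 / ((n : ℝ) + 1)) τ := by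
      rintro n k hnk x ⟨h1, h2, h3⟩
      refine ⟨h1, lt_of_le_of_lt ?_ h2, h3⟩
      have : (n : ℝ) ≤ k := by exact_mod_cast hnk
      gcongr
    have hb2 : ∫⁻ x in Cyl v t a (R0 / 4) 0 τ, ‖f x‖ₑ ≤ 2 * C' + M0 := by
      rw [hU, setLIntegral_iUnion_of_directed _ hdir.directed_le]
      exact iSup_le fun n => main _ (by positivity)
    refine lt_of_le_of_lt hb2 ?_
    exact ENNReal.add_lt_top.2 ⟨ENNReal.mul_lt_top (by norm_num) hC't.lt_top, hM0t⟩
  have hL := h.one_le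
  refine ⟨τ / (2 * (1 + L)), by positivity, hIntg.mono_set ?_⟩
  rintro x ⟨hxD, hx⟩
  rw [mem_ball] at hx
  have hle : τ / (2 * (1 + L)) ≤ τ := div_le_self hτ.le (by linarith)
  have htx := hD2 x (by rw [mem_ball]; linarith) hxD
  have hl := (abs_le.1 (h.lip x a)).2
  rw [hta, sub_zero] at hl
  rw [lt_div_iff₀ (by positivity)] at hx
  have hd := dist_nonneg (x := x) (y := a)
  refine ⟨?_, htx, by nlinarith⟩
  have := dist_Pj h htx.le
  rw [dist_comm] at this
  have := dist_triangle (Pj v t x) x a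
  nlinarith

end main

lemma dist_le_of_mem_cube {d : ℕ} {x y : EuclideanSpace ℝ (Fin d)} {l : ℝ} (hl : 0 ≤ l)
    (hx : x ∈ cube y l) : dist x y ≤ d * (l / 2) := by
  have hx' : ∀ i, |x i - y i| ≤ l / 2 := hx
  have h1 : dist x y ≤ √(d * (l / 2) ^ 2) := by
    rw [EuclideanSpace.dist_eq]
    refine Real.sqrt_le_sqrt ?_
    calc ∑ i, dist (x i) (y i) ^ 2 ≤ ∑ _i : Fin d, (l / 2) ^ 2 := by
          refine Finset.sum_le_sum fun i _ => ?_
          rw [Real.dist_eq]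
          exact pow_le_pow_left₀ (abs_nonneg _) (hx' i) 2
      _ = _ := by simp
  refine h1.trans ?_
  rw [Real.sqrt_le_left (by positivity), mul_pow]
  have : (d : ℝ) ≤ (d : ℝ) ^ 2 := by exact_mod_cast Nat.le_self_pow (by norm_num) d
  gcongr

lemma ball_subset_cube {d : ℕ} (y : EuclideanSpace ℝ (Fin d)) (ρ : ℝ) :
    ball y ρ ⊆ cube y (2 * ρ) := by
  intro x hx i
  rw [mem_ball, dist_eq_norm] at hx
  have := PiLp.norm_apply_le (x - y) i
  rw [PiLp.sub_apply, Real.norm_eq_abs] at this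
  linarith

lemma measurableSet_cube {d : ℕ} (y : EuclideanSpace ℝ (Fin d)) (l : ℝ) :
    MeasurableSet (cube y l) := by
  have : cube y l = ⋂ i, {x | |x i - y i| ≤ l / 2} := by
    ext x; simp [cube]
  rw [this]
  exact MeasurableSet.iInter fun i => measurableSet_le (by fun_prop) (by fun_prop)

lemma exists_camp {d : ℕ} (n : ℕ) (ω : ℝ → ℝ) (hω : IsModulusOfOrder ω n)
    (D : Set (EuclideanSpace ℝ (Fin d))) (f f' : EuclideanSpace ℝ (Fin d) → ℝ)
    (hff' : f =ᵐ[volume.restrict D] f')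
    (hfin : zygSeminormInt ω n D f < ⊤) {R0 : ℝ} (hR : 0 < R0) :
    ∃ (K : ℝ≥0∞) (κ : ℝ), K ≠ ⊤ ∧ 1 ≤ κ ∧ Camp (n + 1) f' D K κ R0 := by
  refine ⟨(zygSeminormInt ω n D f + 1) * ENNReal.ofReal (ω (2 * R0) * 2 ^ d), 2 * d + 1,
    ENNReal.mul_ne_top (by simp [hfin.ne]) ENNReal.ofReal_ne_top,
    by linarith [Nat.cast_nonneg (α := ℝ) d], ?_⟩
  intro y ρ hρ hρR hball
  have hsub : cube y (2 * (2 * ρ)) ⊆ D := by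
    refine Subset.trans (fun x hx => ?_) hball
    have := dist_le_of_mem_cube (by positivity) hx
    rw [mem_ball]
    linarith
  have hlt : (⨅ (P : EuclideanSpace ℝ (Fin d) → ℝ) (_ : P ∈ PolyLE d n),
      (ENNReal.ofReal (ω (2 * ρ) * (2 * ρ) ^ d))⁻¹ *
        ∫⁻ x in cube y (2 * ρ), ENNReal.ofReal |f x - P x|) < zygSeminormInt ω n D f + 1 := by
    refine lt_of_le_of_lt ?_ (ENNReal.lt_add_right hfin.ne one_ne_zero)
    unfold zygSeminormInt
    exact le_iSup₂_of_le y (2 * ρ) (le_iSup₂_of_le (by positivity) hsub le_rfl)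
  simp only [iInf_lt_iff] at hlt
  obtain ⟨P, hP, hPlt⟩ := hlt
  refine ⟨P, measurable_poly hP, sum_dcoef_poly hP, ?_⟩
  set S := zygSeminormInt ω n D f + 1 with hS
  have hSt : S ≠ ⊤ := by simp [hS, hfin.ne]
  set I := ∫⁻ x in cube y (2 * ρ), ENNReal.ofReal |f x - P x| with hI
  have hI1 : I ≤ S * ENNReal.ofReal (ω (2 * ρ) * (2 * ρ) ^ d) := by
    set A := ENNReal.ofReal (ω (2 * ρ) * (2 * ρ) ^ d) with hA
    have hAt : A ≠ ⊤ := ENNReal.ofReal_ne_top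
    by_cases hA0 : A = 0
    · rw [hA0, ENNReal.inv_zero] at hPlt
      have : I = 0 := by
        by_contra h0
        rw [ENNReal.top_mul h0] at hPlt
        exact not_top_lt hPlt
      rw [this]; exact zero_le
    · calc I = A * A⁻¹ * I := by rw [ENNReal.mul_inv_cancel hA0 hAt, one_mul]
        _ = A⁻¹ * I * A := by ring
        _ ≤ S * A := by gcongr
  have hcD : cube y (2 * ρ) ⊆ D := by
    intro x hx
    refine hsub ?_
    intro i
    exact (hx i).trans (by linarith)
  have hball_D : ball y ρ ⊆ D := (ball_subset_cube y ρ).trans hcD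
  calc ∫⁻ x in ball y ρ, ‖f' x - P x‖ₑ = ∫⁻ x in ball y ρ, ENNReal.ofReal |f x - P x| := by
        refine lintegral_congr_ae ?_
        filter_upwards [ae_restrict_of_ae_restrict_of_subset hball_D hff'] with x hx
        rw [hx, ← ofReal_norm, Real.norm_eq_abs]
    _ ≤ I := lintegral_mono_set (ball_subset_cube y ρ)
    _ ≤ _ := hI1
    _ ≤ S * (ENNReal.ofReal (ω (2 * R0) * 2 ^ d) * ENNReal.ofReal (ρ ^ d)) := by
        rw [← ENNReal.ofReal_mul (mul_nonneg (hω.nonneg _ (by positivity)) (by positivity))]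
        refine mul_le_mul_right (ENNReal.ofReal_le_ofReal ?_) _
        rw [mul_pow, mul_assoc]
        refine mul_le_mul_of_nonneg_right ?_ (by positivity)
        exact hω.monotoneOn (mem_Ici.2 (by positivity)) (mem_Ici.2 (by positivity)) (by linarith)
    _ = _ := by rw [mul_assoc]

lemma exists_height {d : ℕ} {D : Set (EuclideanSpace ℝ (Fin d))} (hDo : IsOpen D) {δ R : ℝ}
    (hδ : 0 < δ) (hR : 0 < R) {a : EuclideanSpace ℝ (Fin d)} (ha : a ∈ frontier D)
    (g : EuclideanSpace ℝ (Fin d) ≃ᵢ EuclideanSpace ℝ (Fin d)) (j : Fin d)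
    (A : EuclideanSpace ℝ (Fin d) → ℝ) (hga : g a = 0)
    (hA : LipschitzWith (Real.toNNReal δ) A)
    (hAj : ∀ x y : EuclideanSpace ℝ (Fin d), (∀ i, i ≠ j → x i = y i) → A x = A y)
    (hg : (g '' D) ∩ cube 0 R = {x ∈ cube (0 : EuclideanSpace ℝ (Fin d)) R | A x < x j}) :
    ∃ (v : EuclideanSpace ℝ (Fin d)) (t : EuclideanSpace ℝ (Fin d) → ℝ),
      IsHeight v t (1 + δ) ∧ t a = 0 ∧ ∀ x ∈ ball a (R / 2), (x ∈ D ↔ 0 < t x) := by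
  set e := g.toRealAffineIsometryEquiv with he
  have hge : ∀ x, e x = g x := fun x => by
    rw [he, IsometryEquiv.coeFn_toRealAffineIsometryEquiv]
  set v := e.linearIsometryEquiv.symm (EuclideanSpace.single j (1 : ℝ)) with hv
  have hgv : ∀ x (c : ℝ), g (x + c • v) = g x + c • EuclideanSpace.single j (1 : ℝ) := by
    intro x c
    have := e.map_vadd x (c • v)
    rw [vadd_eq_add, vadd_eq_add, hge, hge, map_smul, hv,
      LinearIsometryEquiv.apply_symm_apply] at this
    rw [add_comm, this, add_comm]
  set t : EuclideanSpace ℝ (Fin d) → ℝ := fun x => (g x) j - A (g x) with ht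
  have hH : IsHeight v t (1 + δ) := by
    refine ⟨?_, by linarith, ?_, ?_⟩
    · rw [hv, LinearIsometryEquiv.norm_map]; simp
    · intro x y
      have h1 : |(g x) j - (g y) j| ≤ dist x y := by
        have := PiLp.norm_apply_le (g x - g y) j
        rw [PiLp.sub_apply, Real.norm_eq_abs, ← dist_eq_norm, g.dist_eq] at this
        exact this
      have h2 : |A (g x) - A (g y)| ≤ δ * dist x y := by
        have := hA.dist_le_mul (g x) (g y)
        rwa [Real.dist_eq, g.dist_eq, Real.coe_toNNReal _ hδ.le] at this
      simp only [ht]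
      rw [abs_le] at *
      constructor <;> linarith
    · intro x c
      have hAe : A (g x + c • EuclideanSpace.single j (1 : ℝ)) = A (g x) := by
        refine hAj _ _ fun i hi => ?_
        simp [hi]
      simp only [ht]
      rw [hgv, hAe]
      simp
      ring
  have hiff : ∀ x ∈ ball a (R / 2), (x ∈ D ↔ 0 < t x) := by
    intro x hx
    have hcube : g x ∈ cube (0 : EuclideanSpace ℝ (Fin d)) R := by
      have h1 : g x ∈ ball (0 : EuclideanSpace ℝ (Fin d)) (R / 2) := by
        rw [mem_ball, ← hga, g.dist_eq]; exact hx
      have := ball_subset_cube _ _ h1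
      rwa [mul_div_cancel₀ R (two_ne_zero)] at this
    have h1 : x ∈ D ↔ g x ∈ (g '' D) ∩ cube 0 R := by
      constructor
      · intro h; exact ⟨⟨x, h, rfl⟩, hcube⟩
      · rintro ⟨⟨z, hz, hzx⟩, -⟩
        rwa [← g.injective hzx]
    rw [h1, hg]
    simp only [ht, sub_pos]
    exact ⟨fun h => h.2, fun h => ⟨hcube, h⟩⟩
  refine ⟨v, t, hH, ?_, hiff⟩
  have haD : a ∉ D := by
    rw [hDo.frontier_eq] at ha
    exact ha.2
  refine le_antisymm ?_ ?_
  · by_contra hcon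
    exact haD ((hiff a (mem_ball_self (by positivity))).2 (not_le.1 hcon))
  · by_contra hcon
    have hopen : IsOpen ({x | t x < 0} ∩ ball a (R / 2)) :=
      (isOpen_lt hH.continuous continuous_const).inter isOpen_ball
    obtain ⟨z, ⟨hz1, hz2⟩, hzD⟩ := mem_closure_iff.1 (frontier_subset_closure ha) _ hopen
      ⟨not_le.1 hcon, mem_ball_self (by positivity)⟩
    have h3 := (hiff z hz2).1 hzD
    have h4 : t z < 0 := hz1
    linarith

/-- On a bounded Lipschitz domain, any locally integrable `f` with finite interior
Zygmund seminorm belongs to `L¹(D)`. -/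
theorem statement_9 {d : ℕ} (n : ℕ) (ω : ℝ → ℝ) (hω : IsModulusOfOrder ω n)
    (D : Set (EuclideanSpace ℝ (Fin d))) (hD : IsLipschitzDomain D)
    (f : EuclideanSpace ℝ (Fin d) → ℝ)
    (hloc : LocallyIntegrableOn f D)
    (hfin : zygSeminormInt ω n D f < ⊤) :
    IntegrableOn f D := by
  obtain ⟨hDo, hDc, hDb, δ, R, hδ, hR, hfr⟩ := hD
  have hae := hloc.aestronglyMeasurable
  set f' := hae.mk f with hf'
  have hf'm : Measurable f' := hae.stronglyMeasurable_mk.measurable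
  have hff' : f =ᵐ[volume.restrict D] f' := hae.ae_eq_mk
  have hloc' : LocallyIntegrableOn f' D := by
    intro x hx
    obtain ⟨u, hu, hui⟩ := hloc x hx
    refine ⟨u ∩ D, inter_mem hu self_mem_nhdsWithin, ?_⟩
    refine (hui.mono_set inter_subset_left).congr ?_
    exact ae_restrict_of_ae_restrict_of_subset inter_subset_right hff'
  obtain ⟨K, κ, hK, hκ, hcamp⟩ := exists_camp n ω hω D f f' hff' hfin
    (R0 := R / 2) (by positivity)
  suffices hmain : IntegrableOn f' D from hmain.congr hff'.symm
  have hclo : LocallyIntegrableOn f' (closure D) (volume.restrict D) := by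
    intro x hx
    by_cases hxD : x ∈ D
    · obtain ⟨u, hu, hui⟩ := hloc' x hxD
      rw [hDo.nhdsWithin_eq hxD] at hu
      refine ⟨u, mem_nhdsWithin_of_mem_nhds hu, ?_⟩
      exact hui.mono_measure Measure.restrict_le_self
    · have hxf : x ∈ frontier D := by
        rw [hDo.frontier_eq]; exact ⟨hx, hxD⟩
      obtain ⟨g, j, A, hga, hA, hAj, hg⟩ := hfr x hxf
      obtain ⟨v, t, hH, hta, hiff⟩ := exists_height hDo hδ hR hxf g j A hga hA hAj hg
      obtain ⟨σ, hσ, hIntg⟩ := patch hH hf'm hcamp hK hκ (by positivity) x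
        (fun z hz => (hiff z hz).2) (fun z hz => (hiff z hz).1) hta hloc'
      refine ⟨ball x σ, mem_nhdsWithin_of_mem_nhds (ball_mem_nhds x hσ), ?_⟩
      rw [IntegrableOn, Measure.restrict_restrict measurableSet_ball, inter_comm]
      exact hIntg
  have := hclo.integrableOn_isCompact hDb.isCompact_closure
  rw [IntegrableOn, Measure.restrict_restrict isClosed_closure.measurableSet,
    inter_eq_right.2 subset_closure] at this
  exact this

end
end
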